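/- arXiv:1404.1690 — 3 statements merged into one kernel-verified Lean document; each statement's English description precedes it below -/
import Mathlib

section
/- Let J ∈ ℕ and s > 0, and let φ¹ : ℝ → ℂ be a continuous function with supp φ¹ = [0, s] whose integer translates {φ¹(· − m) : m ∈ ℤ} form an orthonormal family in L²(ℝ). Let ψ¹ : ℝ → ℂ be continuous and compactly supported such that the family {x ↦ ψ¹(2^j x − l) : 0 ≤ j ≤ J, l ∈ ℤ} is orthogonal in L²(ℝ) and consists of nonzero functions, and such that each function x ↦ ψ¹(2^j x − l) (0 ≤ j ≤ J, l ∈ ℤ) lies in the L²-closed linear span of {x ↦ φ¹(2^{J+1} x − k) : k ∈ ℤ}. Let n ∈ ℕ, let t_1, …, t_n ∈ (0,1) satisfy t_i − t_j ∉ 2^{−(J+1)} ℤ for all i ≠ j, and for each 1 ≤ i ≤ n and 0 ≤ j ≤ J let L_j^i ⊂ ℤ be a finite set. Then the family of functions {x ↦ ψ¹(2^j (x − t_i) + l) : 1 ≤ i ≤ n, 0 ≤ j ≤ J, l ∈ L_j^i}, indexed by the triples (i, j, l), is linearly independent. -/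
open MeasureTheory
open Filter Function
open scoped CompactlySupported ComplexConjugate InnerProductSpace

/-!
A compactly supported wavelet `ψ (2 ^ j * x - l)` is orthogonal to all but finitely many of the
pairwise orthogonal functions `φ (2 ^ (J + 1) * x - k)`; lying in their closed span, it is therefore
a finite linear combination of them, and by continuity this holds pointwise. Shifting by the `t i`,
whose differences avoid `2 ^ (-(J + 1)) ℤ`, yields pairwise distinct translates of
`φ (2 ^ (J + 1) * x)`, and distinct translates of a nonzero compactly supported function are
linearly independent. Hence a relation between the shifted wavelets splits into one relation for
each `t i`, where the orthogonality of the wavelets makes all coefficients vanish.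
-/

section LinearAlgebra

theorem eq_zero_of_linearIndepOn_of_sum_sum_sum_eq_zero {R M ι κ ν : Type*} [Ring R]
    [AddCommGroup M] [Module R M] {f : ι × κ × ν → M} {S : Set (ι × κ × ν)}
    (hf : LinearIndepOn R f S) {A : Finset ι} {B : Finset κ} {L : ι → κ → Finset ν}
    (hS : ∀ i ∈ A, ∀ j ∈ B, ∀ l ∈ L i j, (i, j, l) ∈ S) {c : ι → κ → ν → R}
    (hc : ∑ i ∈ A, ∑ j ∈ B, ∑ l ∈ L i j, c i j l • f (i, j, l) = 0) :
    ∀ i ∈ A, ∀ j ∈ B, ∀ l ∈ L i j, c i j l = 0 := by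
  intro i hi j hj l hl
  let triple : (Σ _ : ι, Σ _ : κ, ν) ↪ ι × κ × ν :=
    ⟨fun q => (q.1, q.2.1, q.2.2), by rintro ⟨_, _, _⟩ ⟨_, _, _⟩ h; simp_all⟩
  let T : Finset (ι × κ × ν) := (A.sigma fun i => B.sigma (L i)).map triple
  have hT : (i, j, l) ∈ T :=
    Finset.mem_map.2 ⟨⟨i, j, l⟩, by simp [hi, hj, hl], rfl⟩
  refine linearIndepOn_iff'.1 hf T (fun q => c q.1 q.2.1 q.2.2) ?_ ?_ (i, j, l) hT
  · rintro q hq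
    obtain ⟨⟨i, j, l⟩, hijl, rfl⟩ := Finset.mem_map.1 hq
    simp only [Finset.mem_sigma] at hijl
    exact hS i hijl.1 j hijl.2.1 l hijl.2.2
  · simp only [T, Finset.sum_map, Finset.sum_sigma]
    exact hc

/-- Expand each `f p` in the `v k`: a relation among the `T i (f p)` is then a relation among the
`T i (v k)`, so it splits into one relation for each `i`. -/
theorem linearIndependent_apply_of_mem_span {R M M' ι κ α : Type*} [Semiring R]
    [AddCommMonoid M] [Module R M] [AddCommMonoid M'] [Module R M'] {T : ι → M →ₗ[R] M'}
    {v : α → M} (hTv : LinearIndependent R fun q : ι × α => T q.1 (v q.2))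
    {f : κ → M} (hf : LinearIndependent R f) (hfv : ∀ p, f p ∈ Submodule.span R (Set.range v)) :
    LinearIndependent R fun q : ι × κ => T q.1 (f q.2) := by
  choose coeff hcoeff using fun p => Finsupp.mem_span_range_iff_exists_finsupp.1 (hfv p)
  have hcoeff_indep : LinearIndependent R coeff := by
    refine .of_comp (Finsupp.linearCombination R v) ?_
    convert hf
    exact funext hcoeff
  have hsingle : LinearIndependent R fun q : Σ _ : ι, κ => Finsupp.single q.1 (coeff q.2) :=
    Finsupp.linearIndependent_single (fun _ => coeff) fun _ => hcoeff_indep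
  obtain ⟨E, hE, hEsingle⟩ : ∃ E : (ι →₀ α →₀ R) →ₗ[R] M', Injective E ∧
      ∀ i, E ∘ₗ Finsupp.lsingle i = T i ∘ₗ Finsupp.linearCombination R v := by
    refine ⟨(Finsupp.linearCombination R fun q : ι × α => T q.1 (v q.2)) ∘ₗ
      (Finsupp.curryLinearEquiv R).symm.toLinearMap, ?_, fun i => ?_⟩
    · exact Injective.comp (g := Finsupp.linearCombination R _) hTv
        (Finsupp.curryLinearEquiv R).symm.injective
    · ext k
      simp [Finsupp.curryLinearEquiv]
  refine (linearIndependent_equiv (Equiv.sigmaEquivProd ι κ)).1 ?_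
  convert hsingle.map_injOn E hE.injOn
  refine funext fun q => ?_
  exact (congrArg (T q.1) (hcoeff q.2)).symm.trans
    (LinearMap.congr_fun (hEsingle q.1) (coeff q.2)).symm

end LinearAlgebra

section Translates

/-- The leftmost translate in a relation is the only one that does not vanish just to the right
of the left end point of its support. -/
theorem linearIndependent_translates {𝕜 E : Type*} [DivisionRing 𝕜] [AddCommGroup E] [Module 𝕜 E]
    {φ : ℝ → E} (hφ : φ ≠ 0) (hbdd : BddBelow (support φ)) :
    LinearIndependent 𝕜 fun a x : ℝ => φ (x - a) := by
  rw [linearIndependent_iff']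
  intro S
  induction S using Finset.induction_on_min with
  | empty => simp
  | insert a S haS ih =>
    intro c hc
    have ha : a ∉ S := fun h => (haS a h).false
    obtain ⟨y, hy, hyS⟩ : ∃ y ∈ support φ, ∀ b ∈ S, y < sInf (support φ) + (b - a) := by
      refine (mem_closure_iff_frequently.1
        (csInf_mem_closure (support_nonempty_iff.2 hφ) hbdd)).and_eventually ?_ |>.exists
      refine (eventually_all_finset S).2 fun b hb => Iio_mem_nhds ?_
      linarith [haS b hb]
    have hvanish : ∀ b ∈ S, c b • φ (y + a - b) = 0 := by
      intro b hb
      have : y + a - b ∉ support φ := notMem_of_lt_csInf (by linarith [hyS b hb]) hbdd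
      rw [notMem_support.1 this, smul_zero]
    have hca : c a = 0 := by
      have := congrFun hc (y + a)
      simp only [Finset.sum_apply, Pi.smul_apply, Pi.zero_apply, Finset.sum_insert ha,
        Finset.sum_eq_zero hvanish, add_sub_cancel_right, add_zero] at this
      exact (smul_eq_zero.1 this).resolve_right hy
    rw [Finset.sum_insert ha, hca, zero_smul, zero_add] at hc
    simpa [hca] using ih c hc

theorem linearIndependent_dilated_translates {𝕜 E ι : Type*} [DivisionRing 𝕜] [AddCommGroup E]
    [Module 𝕜 E] {φ : ℝ → E} (hφ : φ ≠ 0) (hbdd : BddBelow (support φ)) {N : ℝ} (hN : N ≠ 0)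
    {t : ι → ℝ} (ht : Pairwise fun i i' => ∀ z : ℤ, t i - t i' ≠ z / N) :
    LinearIndependent 𝕜 fun (q : ι × ℤ) (x : ℝ) => φ (N * (x - t q.1) - q.2) := by
  have hinj : Injective fun q : ι × ℤ => N * t q.1 + q.2 := by
    rintro ⟨i, k⟩ ⟨i', k'⟩ (h : N * t i + k = N * t i' + k')
    obtain rfl : i = i' := by
      by_contra hne
      refine ht hne (k' - k) ?_
      rw [eq_div_iff hN]
      push_cast
      linarith
    simpa using h
  have hscale : Injective (LinearMap.funLeft 𝕜 E fun x : ℝ => N * x) :=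
    LinearMap.funLeft_injective_of_surjective _ _ _ (mul_left_surjective₀ hN)
  convert! ((linearIndependent_translates hφ hbdd).comp _ hinj).map_injOn _ hscale.injOn
    using 3 with q x
  simp only [LinearMap.funLeft_apply, comp_apply]
  congr 1
  ring

end Translates

section Hilbert

variable {𝕜 H : Type*} [RCLike 𝕜] [NormedAddCommGroup H] [InnerProductSpace 𝕜 H]

theorem mem_orthogonal_span_iff {s : Set H} {h : H} :
    h ∈ (Submodule.span 𝕜 s)ᗮ ↔ ∀ u ∈ s, ⟪u, h⟫_𝕜 = 0 := by
  rw [← Submodule.span_singleton_le_iff_mem, ← Submodule.isOrtho_iff_le, Submodule.isOrtho_comm,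
    Submodule.isOrtho_span]
  simp only [Set.mem_singleton_iff, forall_eq]

/-- The projection of `h` onto the span of the finitely many `v k` not orthogonal to `h` leaves a
remainder that lies in the closed span of `v` and is orthogonal to it. -/
theorem mem_span_of_mem_closure_span_of_finite {α : Type*} {v : α → H}
    (hv : Pairwise fun k k' => ⟪v k, v k'⟫_𝕜 = 0) {h : H}
    (hh : h ∈ (Submodule.span 𝕜 (Set.range v)).topologicalClosure)
    (hfin : {k | ⟪v k, h⟫_𝕜 ≠ 0}.Finite) : h ∈ Submodule.span 𝕜 (Set.range v) := by
  let K := {k | ⟪v k, h⟫_𝕜 ≠ 0}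
  let U := Submodule.span 𝕜 (v '' K)
  have : FiniteDimensional 𝕜 U := .span_of_finite 𝕜 (hfin.image v)
  have hU : U ≤ Submodule.span 𝕜 (Set.range v) := Submodule.span_mono (Set.image_subset_range v K)
  let r := h - U.starProjection h
  have hrU : r ∈ Uᗮ := U.sub_starProjection_mem_orthogonal h
  have hvU {k} (hk : k ∉ K) : v k ∈ Uᗮ := mem_orthogonal_span_iff.2 <| by
    rintro _ ⟨k', hk', rfl⟩
    exact hv (ne_of_mem_of_not_mem hk' hk)
  have horth (k : α) : ⟪v k, r⟫_𝕜 = 0 := by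
    by_cases hk : k ∈ K
    · exact Submodule.inner_right_of_mem_orthogonal
        (Submodule.subset_span (Set.mem_image_of_mem v hk)) hrU
    · rw [inner_sub_right, not_not.1 hk,
        Submodule.inner_left_of_mem_orthogonal (U.starProjection_apply_mem h) (hvU hk), sub_zero]
  have hr_mem : r ∈ (Submodule.span 𝕜 (Set.range v)).topologicalClosure :=
    sub_mem hh (Submodule.le_topologicalClosure _ (hU (U.starProjection_apply_mem h)))
  have hr_orth : r ∈ (Submodule.span 𝕜 (Set.range v)).topologicalClosureᗮ := by
    rw [Submodule.orthogonal_closure, mem_orthogonal_span_iff]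
    exact Set.forall_mem_range.2 horth
  have hr : r = 0 := inner_self_eq_zero.1 (hr_orth r hr_mem)
  rw [sub_eq_zero.1 hr]
  exact hU (U.starProjection_apply_mem h)

end Hilbert

section CompactlySupported

variable {X E : Type*} [TopologicalSpace X] [NormedAddCommGroup E]

/-- The inclusion of `C_c(X, E)` into all functions, as a linear map. -/
def ccCoeFn (𝕜 : Type*) [NormedField 𝕜] [NormedSpace 𝕜 E] : C_c(X, E) →ₗ[𝕜] X → E where
  toFun f := f
  map_add' := CompactlySupportedContinuousMap.coe_add
  map_smul' := CompactlySupportedContinuousMap.coe_smul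

variable [MeasurableSpace X] [OpensMeasurableSpace X] {μ : Measure X} [IsFiniteMeasureOnCompacts μ]

theorem memLp_of_compactlySupported (p : ENNReal) (f : C_c(X, E)) : MemLp f p μ :=
  f.continuous.memLp_of_hasCompactSupport f.hasCompactSupport

variable (μ) in
/-- The map sending a compactly supported continuous function to its class in `L²(μ)`. -/
noncomputable def ccToL2 (𝕜 : Type*) [NormedField 𝕜] [NormedSpace 𝕜 E] :
    C_c(X, E) →ₗ[𝕜] Lp E 2 μ where
  toFun f := (memLp_of_compactlySupported 2 f).toLp f
  map_add' f g := (memLp_of_compactlySupported 2 f).toLp_add (memLp_of_compactlySupported 2 g)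
  map_smul' c f := (memLp_of_compactlySupported 2 f).toLp_const_smul c

theorem ccToL2_injective {𝕜 : Type*} [NormedField 𝕜] [NormedSpace 𝕜 E] [μ.IsOpenPosMeasure] :
    Injective (ccToL2 (X := X) (E := E) μ 𝕜) := by
  intro f g hfg
  have hae : f =ᵐ[μ] g :=
    (MemLp.toLp_eq_toLp_iff (memLp_of_compactlySupported 2 f)
      (memLp_of_compactlySupported 2 g)).1 hfg
  exact DFunLike.coe_injective ((f.continuous.ae_eq_iff_eq μ g.continuous).1 hae)

variable {𝕜 : Type*} [RCLike 𝕜]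

theorem inner_ccToL2 (f g : C_c(X, 𝕜)) :
    ⟪ccToL2 μ 𝕜 f, ccToL2 μ 𝕜 g⟫_𝕜 = ∫ x, conj (f x) * g x ∂μ := by
  rw [L2.inner_def]
  apply integral_congr_ae
  filter_upwards [(memLp_of_compactlySupported (μ := μ) 2 f).coeFn_toLp,
    (memLp_of_compactlySupported (μ := μ) 2 g).coeFn_toLp] with x hf hg
  change ⟪(memLp_of_compactlySupported 2 f).toLp f x,
    (memLp_of_compactlySupported 2 g).toLp g x⟫_𝕜 = _
  rw [hf, hg, RCLike.inner_apply, mul_comm]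

theorem ccToL2_mem_closure_span {α : Type*} {v : α → C_c(X, 𝕜)} {g : C_c(X, 𝕜)}
    (hg : ∀ ε : ℝ, 0 < ε → ∃ (F : Finset α) (c : α → 𝕜),
      eLpNorm (fun x => g x - ∑ k ∈ F, c k * v k x) 2 μ < ENNReal.ofReal ε) :
    ccToL2 μ 𝕜 g ∈ (Submodule.span 𝕜 (Set.range (ccToL2 μ 𝕜 ∘ v))).topologicalClosure := by
  refine Metric.mem_closure_iff.2 fun ε hε => ?_
  obtain ⟨F, c, hFc⟩ := hg ε hε
  refine ⟨ccToL2 μ 𝕜 (∑ k ∈ F, c k • v k), ?_, ?_⟩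
  · simp only [map_sum, map_smul]
    exact sum_mem fun k _ => Submodule.smul_mem _ _ (Submodule.subset_span ⟨k, rfl⟩)
  · have hsub : (fun x => g x - ∑ k ∈ F, c k * v k x) = ⇑g - ⇑(∑ k ∈ F, c k • v k) := by
      ext x
      simp
    rw [hsub, ← Lp.edist_toLp_toLp _ _ (memLp_of_compactlySupported 2 g)
      (memLp_of_compactlySupported 2 _)] at hFc
    rw [dist_edist]
    exact ENNReal.toReal_lt_of_lt_ofReal hFc

variable [μ.IsOpenPosMeasure]

theorem mem_span_of_ccToL2_mem_closure_span {α : Type*} {v : α → C_c(X, 𝕜)} {g : C_c(X, 𝕜)}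
    (hv : Pairwise fun k k' => ∫ x, conj (v k x) * v k' x ∂μ = 0)
    (hg : ccToL2 μ 𝕜 g ∈ (Submodule.span 𝕜 (Set.range (ccToL2 μ 𝕜 ∘ v))).topologicalClosure)
    (hfin : {k | ∃ x, v k x ≠ 0 ∧ g x ≠ 0}.Finite) : g ∈ Submodule.span 𝕜 (Set.range v) := by
  have hspan : ccToL2 μ 𝕜 g ∈ Submodule.span 𝕜 (Set.range (ccToL2 μ 𝕜 ∘ v)) := by
    refine mem_span_of_mem_closure_span_of_finite
      (fun k k' hkk' => (inner_ccToL2 _ _).trans (hv hkk')) hg (hfin.subset fun k hk => ?_)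
    by_contra hdisj
    refine hk ((inner_ccToL2 _ _).trans (integral_eq_zero_of_ae (ae_of_all _ fun x => ?_)))
    by_cases hx : v k x = 0
    · simp [hx]
    · have hgx : g x = 0 := by
        by_contra hgx
        exact hdisj ⟨x, hx, hgx⟩
      simp [hgx]
  rw [Set.range_comp, ← Submodule.map_span] at hspan
  obtain ⟨g', hg', hgg'⟩ := hspan
  rwa [← ccToL2_injective hgg']

theorem linearIndependent_of_pairwise_integral_eq_zero {κ : Type*} {f : κ → C_c(X, 𝕜)}
    (hne : ∀ p, f p ≠ 0) (horth : Pairwise fun p q => ∫ x, conj (f p x) * f q x ∂μ = 0) :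
    LinearIndependent 𝕜 f := by
  refine .of_comp (ccToL2 μ 𝕜) (linearIndependent_of_ne_zero_of_inner_eq_zero ?_ ?_)
  · exact fun p => (map_ne_zero_iff _ ccToL2_injective).2 (hne p)
  · exact fun p q hpq => (inner_ccToL2 _ _).trans (horth hpq)

end CompactlySupported

section Dilates

/-- The rescaled translate `x ↦ f (a * x - b)` of a compactly supported continuous function. -/
def ccDilate {E : Type*} [TopologicalSpace E] [Zero E] (f : C_c(ℝ, E)) {a : ℝ} (ha : a ≠ 0)
    (b : ℝ) : C_c(ℝ, E) where
  toFun x := f (a * x - b)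
  hasCompactSupport' := f.hasCompactSupport.comp_homeomorph
    ((Homeomorph.mulLeft₀ a ha).trans (Homeomorph.subRight b))

theorem finite_setOf_exists_ne_zero {E F : Type*} [Zero E] [Zero F] {φ : ℝ → E} {g : ℝ → F}
    (hφ : HasCompactSupport φ) (hg : HasCompactSupport g) (N : ℝ) :
    {k : ℤ | ∃ x, φ (N * x - k) ≠ 0 ∧ g x ≠ 0}.Finite := by
  have hcompact : IsCompact ((fun p : ℝ × ℝ => N * p.1 - p.2) '' (tsupport g ×ˢ tsupport φ)) :=
    (hg.isCompact.prod hφ.isCompact).image (by fun_prop)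
  refine (Int.isClosedEmbedding_coe_real.isCompact_preimage hcompact).finite_of_discrete.subset ?_
  rintro k ⟨x, hφx, hgx⟩
  exact ⟨(x, N * x - k), ⟨subset_tsupport g hgx, subset_tsupport φ hφx⟩, by simp⟩

variable {𝕜 : Type*} [RCLike 𝕜] {φ : C_c(ℝ, 𝕜)} {N : ℝ}

theorem pairwise_integral_ccDilate_eq_zero (hN : N ≠ 0)
    (hφ : Pairwise fun m m' : ℤ => ∫ x : ℝ, conj (φ (x - m)) * φ (x - m') = 0) :
    Pairwise fun k k' : ℤ => ∫ x, conj (ccDilate φ hN k x) * ccDilate φ hN k' x = 0 := by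
  intro k k' hkk'
  have := Measure.integral_comp_mul_left (fun x : ℝ => conj (φ (x - k)) * φ (x - k')) N
  rwa [hφ hkk', smul_zero] at this

theorem linearIndependent_translates_of_mem_closure_span {ι κ : Type*} (hN : N ≠ 0) (hφ0 : φ ≠ 0)
    (hφ : Pairwise fun m m' : ℤ => ∫ x : ℝ, conj (φ (x - m)) * φ (x - m') = 0)
    {f : κ → C_c(ℝ, 𝕜)} (hf : LinearIndependent 𝕜 f)
    (hfspan : ∀ p, ccToL2 volume 𝕜 (f p) ∈ (Submodule.span 𝕜 (Set.range
      (ccToL2 volume 𝕜 ∘ fun k : ℤ => ccDilate φ hN k))).topologicalClosure)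
    {t : ι → ℝ} (ht : Pairwise fun i i' => ∀ z : ℤ, t i - t i' ≠ z / N) :
    LinearIndependent 𝕜 fun (q : ι × κ) (x : ℝ) => f q.2 (x - t q.1) := by
  have hfspan' (p : κ) : f p ∈ Submodule.span 𝕜 (Set.range fun k : ℤ => ccDilate φ hN k) :=
    mem_span_of_ccToL2_mem_closure_span (pairwise_integral_ccDilate_eq_zero hN hφ) (hfspan p)
      (finite_setOf_exists_ne_zero φ.hasCompactSupport (f p).hasCompactSupport N)
  have hbdd : BddBelow (support φ) :=
    φ.hasCompactSupport.isCompact.bddBelow.mono (subset_tsupport φ)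
  have hφ0' : (φ : ℝ → 𝕜) ≠ 0 := fun h => hφ0 (DFunLike.coe_injective h)
  have hφindep := linearIndependent_dilated_translates (𝕜 := 𝕜) hφ0' hbdd hN ht
  exact linearIndependent_apply_of_mem_span (v := fun k : ℤ => ccDilate φ hN k)
    (T := fun i => LinearMap.funLeft 𝕜 𝕜 (· - t i) ∘ₗ ccCoeFn 𝕜) hφindep hf hfspan'

end Dilates

section Wavelets

/-- The element `x ↦ ψ (2 ^ j * x - l)` of the wavelet system generated by `ψ`, where `p = (j, l)`
consists of the scale `j` and the position `l`. -/
def ccDyadic {E : Type*} [TopologicalSpace E] [Zero E] (ψ : C_c(ℝ, E)) (p : ℕ × ℤ) : C_c(ℝ, E) :=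
  ccDilate ψ (pow_ne_zero p.1 (two_ne_zero' ℝ)) p.2

@[simp]
theorem ccDyadic_apply {E : Type*} [TopologicalSpace E] [Zero E] (ψ : C_c(ℝ, E)) (p : ℕ × ℤ)
    (x : ℝ) : ccDyadic ψ p x = ψ (2 ^ p.1 * x - p.2) :=
  rfl

variable {ψ : ℝ → ℂ}

theorem linearIndepOn_dyadic_of_integral_eq_zero (hψc : Continuous ψ)
    (hψcs : HasCompactSupport ψ) {S : Set (ℕ × ℤ)}
    (horth : ∀ p ∈ S, ∀ q ∈ S, p ≠ q →
      ∫ x : ℝ, conj (ψ (2 ^ p.1 * x - p.2)) * ψ (2 ^ q.1 * x - q.2) = 0)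
    (hne : ∀ p ∈ S, (fun x : ℝ => ψ (2 ^ p.1 * x - p.2)) ≠ 0) :
    LinearIndepOn ℂ (fun (p : ℕ × ℤ) (x : ℝ) => ψ (2 ^ p.1 * x - p.2)) S := by
  let f (p : S) : C_c(ℝ, ℂ) := ccDyadic ⟨⟨ψ, hψc⟩, hψcs⟩ p
  have hf : LinearIndependent ℂ f := by
    refine linearIndependent_of_pairwise_integral_eq_zero (μ := volume) (fun p h => ?_) ?_
    · exact hne p p.2 (congrArg DFunLike.coe h)
    · exact fun p q hpq => horth p p.2 q q.2 (Subtype.coe_ne_coe.2 hpq)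
  exact hf.map_injOn (ccCoeFn ℂ) (DFunLike.coe_injective.injOn)

theorem stmt2_general {ι : Type*} {J : ℕ} {φ : ℝ → ℂ} (hφc : Continuous φ)
    (hφcs : HasCompactSupport φ) (hφne : φ ≠ 0)
    (hφorth : Pairwise fun m m' : ℤ => ∫ x : ℝ, conj (φ (x - m)) * φ (x - m') = 0)
    (hψc : Continuous ψ) (hψcs : HasCompactSupport ψ)
    (hψindep : LinearIndepOn ℂ (fun (p : ℕ × ℤ) (x : ℝ) => ψ (2 ^ p.1 * x - p.2)) {p | p.1 ≤ J})
    (hψspan : ∀ j : ℕ, j ≤ J → ∀ l : ℤ, ∀ ε : ℝ, 0 < ε → ∃ (F : Finset ℤ) (c : ℤ → ℂ),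
      eLpNorm (fun x : ℝ => ψ (2 ^ j * x - l) - ∑ k ∈ F, c k * φ (2 ^ (J + 1) * x - k)) 2 volume
        < ENNReal.ofReal ε)
    {t : ι → ℝ} (ht : Pairwise fun i i' => ∀ z : ℤ, t i - t i' ≠ z / 2 ^ (J + 1)) :
    LinearIndepOn ℂ (fun (q : ι × ℕ × ℤ) (x : ℝ) => ψ (2 ^ q.2.1 * (x - t q.1) + q.2.2))
      {q | q.2.1 ≤ J} := by
  let f (p : {p : ℕ × ℤ | p.1 ≤ J}) : C_c(ℝ, ℂ) := ccDyadic ⟨⟨ψ, hψc⟩, hψcs⟩ p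
  have hf : LinearIndependent ℂ f := .of_comp (ccCoeFn ℂ) hψindep
  have htranslates := linearIndependent_translates_of_mem_closure_span
    (φ := ⟨⟨φ, hφc⟩, hφcs⟩) (pow_ne_zero (J + 1) two_ne_zero)
    (fun h => hφne (congrArg DFunLike.coe h)) hφorth hf
    (fun p => ccToL2_mem_closure_span (hψspan p.1.1 p.2 p.1.2)) ht
  let negShift : {q : ι × ℕ × ℤ | q.2.1 ≤ J} → ι × {p : ℕ × ℤ | p.1 ≤ J} :=
    fun q => (q.1.1, ⟨(q.1.2.1, -q.1.2.2), q.2⟩)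
  have hinj : Injective negShift := by
    rintro ⟨⟨i, j, l⟩, hj⟩ ⟨⟨i', j', l'⟩, hj'⟩ h
    simpa [negShift] using h
  unfold LinearIndepOn
  convert! htranslates.comp negShift hinj using 3 with q
  simp [f, negShift]

end Wavelets

/-- Oversampled wavelet systems: if the shifts `t_1, …, t_n ∈ (0,1)` satisfy
`t_i - t_j ∉ 2^(-(J+1)) ℤ` for `i ≠ j`, then the family
`{ψ¹(2^j(· - t_i) + l) : 1 ≤ i ≤ n, 0 ≤ j ≤ J, l ∈ L_j^i}` is linearly independent. -/
theorem stmt2 (J : ℕ) (s : ℝ) (hs : 0 < s)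
    (φ ψ : ℝ → ℂ) (hφc : Continuous φ) (hφsupp : tsupport φ = Set.Icc 0 s)
    (hφON : ∀ m m' : ℤ,
      (∫ x : ℝ, (starRingEnd ℂ) (φ (x - m)) * φ (x - m')) = if m = m' then 1 else 0)
    (hψc : Continuous ψ) (hψcs : HasCompactSupport ψ)
    (hψorth : ∀ j j' : ℕ, j ≤ J → j' ≤ J → ∀ l l' : ℤ, (j, l) ≠ (j', l') →
      (∫ x : ℝ, (starRingEnd ℂ) (ψ ((2 : ℝ) ^ j * x - l)) * ψ ((2 : ℝ) ^ j' * x - l')) = 0)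
    (hψne : ∀ j : ℕ, j ≤ J → ∀ l : ℤ, (fun x : ℝ => ψ ((2 : ℝ) ^ j * x - l)) ≠ 0)
    (hψspan : ∀ j : ℕ, j ≤ J → ∀ l : ℤ, ∀ ε : ℝ, 0 < ε →
      ∃ (F : Finset ℤ) (c : ℤ → ℂ),
        eLpNorm (fun x : ℝ =>
            ψ ((2 : ℝ) ^ j * x - l) - ∑ k ∈ F, c k * φ ((2 : ℝ) ^ (J + 1) * x - k)) 2 volume
          < ENNReal.ofReal ε)
    (n : ℕ) (t : Fin n → ℝ) (ht : ∀ i, t i ∈ Set.Ioo (0 : ℝ) 1)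
    (htdiff : ∀ i i' : Fin n, i ≠ i' → ∀ z : ℤ, t i - t i' ≠ (z : ℝ) / 2 ^ (J + 1))
    (L : Fin n → ℕ → Finset ℤ) :
    ∀ c : Fin n → ℕ → ℤ → ℂ,
      (fun x : ℝ => ∑ i, ∑ j ∈ Finset.range (J + 1), ∑ l ∈ L i j,
          c i j l * ψ ((2 : ℝ) ^ j * (x - t i) + l)) = 0 →
      ∀ i, ∀ j ∈ Finset.range (J + 1), ∀ l ∈ L i j, c i j l = 0 := by
  have hφcs : HasCompactSupport φ := by
    rw [HasCompactSupport, hφsupp]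
    exact isCompact_Icc
  have hφne : φ ≠ 0 := by
    rintro rfl
    exact (Set.nonempty_Icc.2 hs.le).ne_empty (by simpa using hφsupp.symm)
  have hψindep : LinearIndepOn ℂ (fun (p : ℕ × ℤ) (x : ℝ) => ψ (2 ^ p.1 * x - p.2))
      {p | p.1 ≤ J} :=
    linearIndepOn_dyadic_of_integral_eq_zero hψc hψcs
      (fun p hp q hq => hψorth p.1 q.1 hp hq p.2 q.2) fun p hp => hψne p.1 hp p.2
  intro c hc i
  refine eq_zero_of_linearIndepOn_of_sum_sum_sum_eq_zero (A := Finset.univ)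
    (stmt2_general hφc hφcs hφne (fun m m' h => by simpa [h] using hφON m m')
      hψc hψcs hψindep hψspan htdiff) ?_ ?_ i (Finset.mem_univ i)
  · simp +contextual
  · ext x
    simpa using congrFun hc x
end

section
/- Assume the admissibility hypotheses on φ¹, ψ¹, c₁, c₂. Then the shearlet cone family Ψ(ψ, c) = {ψ_{j,k,m} : j ∈ ℕ, k ∈ ℤ with |k| ≤ 2^{⌊j/2⌋}, m = (m₁, m₂) ∈ ℤ²}, where ψ_{j,k,m}(x₁, x₂) = 2^{3j/4} ψ¹(2^j x₁ + 2^{⌊j/2⌋} k x₂ − c₁ m₁) · φ¹(2^{⌊j/2⌋} x₂ − c₂ m₂), is linearly independent as a family in L²(ℝ²) indexed by the triples (j, k, m). -/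
open MeasureTheory

/-!
Nonzero functions on the line whose supports have pairwise distinct finite infima are linearly
independent. Hence a finite-dimensional space `V` of functions with supports bounded below has only
finitely many infima `b` of supports. A relation `∑ₐ gₐ(x + a y) = 0` with `gₐ ∈ V` not all zero
forces two of the infima `bₐ - a y` to coincide, so it is possible only for the finitely many values
`y = (b - b') / (a - a')`. For all other `y`, restricting a vanishing combination of shearlets to
the line `x₂ = y` therefore separates both the slopes and the functions `ψ¹(2^j · - c₁ m₁)`.
By continuity the coefficients, which are combinations of the functions `φ¹(2^⌊j/2⌋ · - c₂ m₂)`,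
vanish for every `y`, and the translates of `φ¹` are independent by the first remark.
-/

theorem linearIndependent_of_linearIndepOn_product {ι ν R M : Type*} [Semiring R]
    [AddCommMonoid M] [Module R M] {v : ι × ν → M}
    (h : ∀ (s : Finset ι) (t : Finset ν), LinearIndepOn R v (s ×ˢ t : Finset (ι × ν))) :
    LinearIndependent R v := by
  classical
  rw [linearIndependent_iff_finset_linearIndependent]
  exact fun s => (h (s.image Prod.fst) (s.image Prod.snd)).mono
    (Finset.coe_subset.2 Finset.subset_product)

section SupportInfimum

open Function

variable {ι α K M : Type*} [ConditionallyCompleteLinearOrder α]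

theorem exists_mem_forall_lt_of_forall_sInf_lt {A : Set α} (hA : A.Nonempty) {s : Finset ι}
    {b : ι → α} (h : ∀ i ∈ s, sInf A < b i) : ∃ x ∈ A, ∀ i ∈ s, x < b i := by
  obtain rfl | hs := s.eq_empty_or_nonempty
  · exact hA.imp fun x hx => ⟨hx, by simp⟩
  · obtain ⟨x, hxA, hx⟩ := exists_lt_of_csInf_lt hA ((Finset.lt_inf'_iff hs).2 h)
    exact ⟨x, hxA, (Finset.lt_inf'_iff hs).1 hx⟩

theorem eq_zero_of_sum_eq_zero_of_injOn_sInf_support [AddCommMonoid M] {s : Finset ι}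
    {f : ι → α → M} (hbdd : ∀ i ∈ s, BddBelow (support (f i)))
    (hinj : Set.InjOn (fun i => sInf (support (f i))) {i | i ∈ s ∧ f i ≠ 0})
    (hsum : ∑ i ∈ s, f i = 0) : ∀ i ∈ s, f i = 0 := by
  classical
  by_contra! ⟨i, his, hi⟩
  let t := s.filter (f · ≠ 0)
  have mem_t {i : ι} : i ∈ t ↔ i ∈ s ∧ f i ≠ 0 := Finset.mem_filter
  obtain ⟨i₀, hi₀, hmin⟩ :=
    t.exists_min_image (fun i => sInf (support (f i))) ⟨i, mem_t.2 ⟨his, hi⟩⟩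
  obtain ⟨x, hx, hlt⟩ : ∃ x ∈ support (f i₀), ∀ i ∈ t.erase i₀, x < sInf (support (f i)) := by
    refine exists_mem_forall_lt_of_forall_sInf_lt (support_nonempty_iff.2 (mem_t.1 hi₀).2) ?_
    intro i hi
    obtain ⟨hne, hit⟩ := Finset.mem_erase.1 hi
    exact (hmin i hit).lt_of_ne fun h => hne (hinj (mem_t.1 hi₀) (mem_t.1 hit) h).symm
  have sum_at_x : (∑ i ∈ s, f i) x = f i₀ x := by
    rw [Finset.sum_apply]
    refine Finset.sum_eq_single_of_mem i₀ (mem_t.1 hi₀).1 fun i his hne => ?_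
    by_contra hix
    have hit : i ∈ t := mem_t.2 ⟨his, fun h => hix (congrFun h x)⟩
    exact (hlt i (Finset.mem_erase.2 ⟨hne, hit⟩)).not_ge (csInf_le (hbdd i his) hix)
  exact hx (by rw [← sum_at_x, hsum, Pi.zero_apply])

theorem linearIndependent_of_injective_sInf_support [DivisionRing K] [AddCommGroup M] [Module K M]
    {f : ι → α → M} (hne : ∀ i, f i ≠ 0) (hbdd : ∀ i, BddBelow (support (f i)))
    (hinj : Injective fun i => sInf (support (f i))) : LinearIndependent K f := by
  rw [linearIndependent_iff']
  intro s c hsum i hi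
  refine (smul_eq_zero_iff_left (hne i)).1
    (eq_zero_of_sum_eq_zero_of_injOn_sInf_support (f := fun i => c i • f i) ?_ ?_ hsum i hi)
  · exact fun i _ => (hbdd i).mono (support_const_smul_subset (c i) (f i))
  · rintro i ⟨-, hi⟩ i' ⟨-, hi'⟩ h
    simp only [support_const_smul_of_ne_zero _ _ (left_ne_zero_of_smul hi),
      support_const_smul_of_ne_zero _ _ (left_ne_zero_of_smul hi')] at h
    exact hinj h

theorem bddBelow_support_of_mem_span [Semiring K] [AddCommMonoid M] [Module K M]
    {A : Set (α → M)} (hbdd : ∀ g ∈ A, BddBelow (support g)) :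
    ∀ g ∈ Submodule.span K A, BddBelow (support g) := by
  intro g hg
  induction hg using Submodule.span_induction with
  | mem g hg => exact hbdd g hg
  | zero => simp
  | add g g' _ _ hg hg' => exact (hg.union hg').mono (support_add g g')
  | smul c g _ hg => exact hg.mono (support_const_smul_subset c g)

theorem finite_image_sInf_support [DivisionRing K] [AddCommGroup M] [Module K M]
    (V : Submodule K (α → M)) [Module.Finite K V] (hbdd : ∀ g ∈ V, BddBelow (support g)) :
    ((fun g : V => sInf (support g.1)) '' {g | g ≠ 0}).Finite := by
  obtain ⟨s, hs, hbij⟩ :=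
    Set.exists_subset_bijOn {g : V | g ≠ 0} fun g : V => sInf (support g.1)
  have hli : LinearIndependent K ((↑) : s → V) := by
    refine .of_comp V.subtype (linearIndependent_of_injective_sInf_support ?_ ?_ ?_)
    · exact fun g => Subtype.coe_ne_coe.2 (hs g.2)
    · exact fun g => hbdd g.1 g.1.2
    · exact hbij.injOn.injective
  exact hbij.image_eq ▸ hli.setFinite.image _

end SupportInfimum

section Translates

open Function

variable {K M E : Type*} [Zero M] [DivisionRing K] [AddCommGroup E] [Module K E]

theorem sInf_support_comp_add_right {g : ℝ → M} (hg : g ≠ 0) (hbdd : BddBelow (support g)) (t : ℝ) :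
    sInf (support fun x => g (x + t)) = sInf (support g) - t := by
  have himage : (support fun x => g (x + t)) = OrderIso.addRight (-t) '' support g := by
    rw [OrderIso.image_eq_preimage_symm]
    ext x
    simp
  rw [himage, ← OrderIso.map_csInf' _ (support_nonempty_iff.2 hg) hbdd, OrderIso.addRight_apply,
    sub_eq_add_neg]

theorem bddBelow_support_comp_mul_sub {g : ℝ → M} (hbdd : BddBelow (support g)) {r : ℝ}
    (hr : 0 < r) (t : ℝ) : BddBelow (support fun x => g (r * x - t)) := by
  obtain ⟨b, hb⟩ := hbdd
  refine ⟨(b + t) / r, fun x hx => ?_⟩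
  have : b ≤ r * x - t := hb hx
  rw [div_le_iff₀ hr]
  linarith

theorem bddBelow_support_comp_add {g : ℝ → M} (hbdd : BddBelow (support g)) (t : ℝ) :
    BddBelow (support fun x => g (x + t)) := by
  simpa using bddBelow_support_comp_mul_sub hbdd one_pos (-t)

theorem comp_add_right_eq_zero_iff {g : ℝ → M} (t : ℝ) : (fun x => g (x + t)) = 0 ↔ g = 0 := by
  refine ⟨fun h => ?_, fun h => by rw [h]; rfl⟩
  ext x
  simpa using congrFun h (x - t)

theorem linearIndependent_translates_s3 {g : ℝ → E} (hg : g ≠ 0)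
    (hbdd : BddBelow (support g)) : LinearIndependent K fun t x : ℝ => g (x - t) := by
  simp only [sub_eq_add_neg]
  refine linearIndependent_of_injective_sInf_support
    (fun _ => (comp_add_right_eq_zero_iff _).not.2 hg)
    (fun _ => bddBelow_support_comp_add hbdd _) ?_
  simpa only [sInf_support_comp_add_right hg hbdd, sub_neg_eq_add] using add_right_injective _

theorem linearIndependent_comp_mul_sub_mul_intCast {g : ℝ → E} (hg : g ≠ 0)
    (hbdd : BddBelow (support g)) {r c : ℝ} (hr : r ≠ 0) (hc : c ≠ 0) :
    LinearIndependent K fun (n : ℤ) (x : ℝ) => g (r * x - c * n) := by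
  have hinj : Injective fun n : ℤ => c * n := (mul_right_injective₀ hc).comp Int.cast_injective
  have hdil : Injective (LinearMap.funLeft K E fun x : ℝ => r * x) :=
    LinearMap.funLeft_injective_of_surjective _ _ _ (mul_left_surjective₀ hr)
  exact ((linearIndependent_translates_s3 hg hbdd).comp _ hinj).map' _ (LinearMap.ker_eq_bot.2 hdil)

theorem finite_setOf_sum_translates_eq_zero
    (V : Submodule K (ℝ → E)) [Module.Finite K V] (hbdd : ∀ g ∈ V, BddBelow (support g))
    (s : Finset ℝ) :
    {y : ℝ | ∃ g : ℝ → V, (∑ a ∈ s, fun x => (g a).1 (x + a * y)) = 0 ∧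
      ∃ a ∈ s, g a ≠ 0}.Finite := by
  let B := (fun g : V => sInf (support g.1)) '' {g | g ≠ 0}
  have hB : B.Finite := finite_image_sInf_support V hbdd
  refine (((hB.prod hB).prod (s ×ˢ s).finite_toSet).image
    fun q => (q.1.1 - q.1.2) / (q.2.1 - q.2.2)).subset ?_
  rintro y ⟨g, hsum, a₀, ha₀, hga₀⟩
  by_contra hy
  have hinj : Set.InjOn (fun a => sInf (support fun x => (g a).1 (x + a * y)))
      {a | a ∈ s ∧ (fun x => (g a).1 (x + a * y)) ≠ 0} := by
    rintro a ⟨ha, hga⟩ a' ⟨ha', hga'⟩ h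
    rw [ne_eq, comp_add_right_eq_zero_iff] at hga hga'
    simp only [sInf_support_comp_add_right hga (hbdd _ (g a).2),
      sInf_support_comp_add_right hga' (hbdd _ (g a').2)] at h
    by_contra hne
    have hb : sInf (support (g a).1) ∈ B := ⟨g a, by simpa using hga, rfl⟩
    have hb' : sInf (support (g a').1) ∈ B := ⟨g a', by simpa using hga', rfl⟩
    refine hy ⟨((_, _), (a, a')), ⟨⟨hb, hb'⟩, Finset.mem_coe.2 (Finset.mk_mem_product ha ha')⟩, ?_⟩
    rw [div_eq_iff (sub_ne_zero.2 hne)]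
    linear_combination h
  have := eq_zero_of_sum_eq_zero_of_injOn_sInf_support
    (fun a _ => bddBelow_support_comp_add (hbdd _ (g a).2) _) hinj hsum a₀ ha₀
  exact hga₀ (Subtype.ext ((comp_add_right_eq_zero_iff _).1 this))

end Translates

section Shear

open Function

variable {ι ν K E : Type*} [DivisionRing K] [AddCommGroup E] [Module K E] {f : ι → ℝ → E}

theorem finite_setOf_not_linearIndepOn_translates (hf : LinearIndependent K f)
    (hbdd : ∀ i, BddBelow (support (f i))) (s : Finset ι) (t : Finset ℝ) :
    {y : ℝ | ¬ LinearIndepOn K (fun p : ι × ℝ => fun x => f p.1 (x + p.2 * y))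
      (s ×ˢ t : Finset (ι × ℝ))}.Finite := by
  let V := Submodule.span K (f '' s)
  have : Module.Finite K V := .span_of_finite K (s.finite_toSet.image f)
  refine (finite_setOf_sum_translates_eq_zero V
    (bddBelow_support_of_mem_span (by rintro _ ⟨i, -, rfl⟩; exact hbdd i)) t).subset ?_
  intro y hy
  rw [Set.mem_ofPred_eq, linearIndepOn_finset_iff] at hy
  push Not at hy
  obtain ⟨c, hsum, ⟨i, a⟩, hp, hc⟩ := hy
  obtain ⟨hi, ha⟩ := Finset.mem_product.1 hp
  let g (a : ℝ) : V := ⟨∑ i ∈ s, c (i, a) • f i, Submodule.sum_smul_mem _ _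
    fun i hi => Submodule.subset_span (Set.mem_image_of_mem f hi)⟩
  refine ⟨g, ?_, a, ha, fun hga => hc ?_⟩
  · rw [← hsum, Finset.sum_product_right]
    refine Finset.sum_congr rfl fun a _ => ?_
    ext x
    simp [g]
  · exact linearIndependent_iff'.1 hf s (fun i => c (i, a)) (congrArg Subtype.val hga) i hi

theorem eq_zero_of_sum_smul_shear_eq_zero [TopologicalSpace K] [T2Space K]
    (hf : LinearIndependent K f) (hbdd : ∀ i, BddBelow (support (f i)))
    {s : Finset (ι × ℝ)} {w : ι × ℝ → ℝ → K} (hw : ∀ p, Continuous (w p))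
    (hsum : ∀ x y : ℝ, ∑ p ∈ s, w p y • f p.1 (x + p.2 * y) = 0) : ∀ p ∈ s, w p = 0 := by
  classical
  intro p hp
  have hdense := (finite_setOf_not_linearIndepOn_translates hf hbdd (s.image Prod.fst)
    (s.image Prod.snd)).countable.dense_compl ℝ
  refine (hw p).ext_on hdense continuous_zero fun y hy => ?_
  have hli := (not_not.1 hy).mono (Finset.coe_subset.2 Finset.subset_product)
  refine linearIndepOn_finset_iff.1 hli (w · y) ?_ p hp
  ext x
  simpa using hsum x y

theorem linearIndependent_smul_shear [TopologicalSpace K] [IsTopologicalRing K] [T2Space K]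
    (hf : LinearIndependent K f) (hbdd : ∀ i, BddBelow (support (f i))) {h : ι → ν → ℝ → K}
    (hhc : ∀ i n, Continuous (h i n)) (hh : ∀ i, LinearIndependent K (h i)) :
    LinearIndependent K fun (p : (ι × ℝ) × ν) (x : ℝ × ℝ) =>
      h p.1.1 p.2 x.2 • f p.1.1 (x.1 + p.1.2 * x.2) := by
  refine linearIndependent_of_linearIndepOn_product fun t u => ?_
  rw [linearIndepOn_finset_iff]
  intro c hsum ⟨p, n⟩ hpn
  obtain ⟨hp, hn⟩ := Finset.mem_product.1 hpn
  have weight_eq_zero : ∑ n ∈ u, c (p, n) • h p.1 n = 0 := by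
    refine eq_zero_of_sum_smul_shear_eq_zero (w := fun p => ∑ n ∈ u, c (p, n) • h p.1 n) hf hbdd
      (fun p => ?_) (fun x y => ?_) p hp
    · simp only [Finset.sum_fn, Pi.smul_apply]
      fun_prop
    · simpa [Finset.sum_product, Finset.sum_smul, mul_smul] using congrFun hsum (x, y)
  exact linearIndependent_iff'.1 (hh p.1) u (fun n => c (p, n)) weight_eq_zero n hn

end Shear

section Shearlet

open Function

/-- The shearlet `ψ_{j,k,m}` with generators `φ = φ¹`, `ψ = ψ¹` and sampling constants `c₁`, `c₂`;
the index `p` is the tuple `(j, k, m₁, m₂)`. -/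
noncomputable def shearlet (φ ψ : ℝ → ℂ) (c₁ c₂ : ℝ) (p : ℕ × ℤ × ℤ × ℤ) (x : ℝ × ℝ) : ℂ :=
  (((2 : ℝ) ^ ((3 * (p.1 : ℝ)) / 4) : ℝ) : ℂ) *
    ψ ((2 : ℝ) ^ p.1 * x.1 + (2 : ℝ) ^ (p.1 / 2) * (p.2.1 : ℝ) * x.2 - c₁ * p.2.2.1) *
    φ ((2 : ℝ) ^ (p.1 / 2) * x.2 - c₂ * p.2.2.2)

variable {φ ψ : ℝ → ℂ} {c₁ c₂ : ℝ}

theorem continuous_shearlet (hφc : Continuous φ) (hψc : Continuous ψ) (p : ℕ × ℤ × ℤ × ℤ) :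
    Continuous (shearlet φ ψ c₁ c₂ p) := by
  unfold shearlet
  fun_prop

theorem shearlet_eq_smul_shear (p : ℕ × ℤ × ℤ × ℤ) :
    shearlet φ ψ c₁ c₂ p = (((2 : ℝ) ^ ((3 * (p.1 : ℝ)) / 4) : ℝ) : ℂ) • fun x : ℝ × ℝ =>
      φ ((2 : ℝ) ^ (p.1 / 2) * x.2 - c₂ * p.2.2.2) •
        ψ ((2 : ℝ) ^ p.1 * (x.1 + 2 ^ (p.1 / 2) * p.2.1 / 2 ^ p.1 * x.2) - c₁ * p.2.2.1) := by
  ext x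
  have hslope : (2 : ℝ) ^ p.1 * (x.1 + 2 ^ (p.1 / 2) * p.2.1 / 2 ^ p.1 * x.2) =
      2 ^ p.1 * x.1 + 2 ^ (p.1 / 2) * p.2.1 * x.2 := by
    field_simp
  simp only [shearlet, Pi.smul_apply, smul_eq_mul, hslope]
  ring

/-- The position of a shearlet in the family of `linearIndependent_smul_shear`: the pair `(j, m₁)`
selects `ψ¹(2^j · - c₁ m₁)`, the slope is `2^⌊j/2⌋ k / 2^j`, and `m₂` selects the translate of
`φ¹`. -/
noncomputable def shearIndex (p : ℕ × ℤ × ℤ × ℤ) : ((ℕ × ℤ) × ℝ) × ℤ :=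
  (((p.1, p.2.2.1), 2 ^ (p.1 / 2) * p.2.1 / 2 ^ p.1), p.2.2.2)

theorem shearIndex_injective : Injective shearIndex := by
  rintro ⟨j, k, m, n⟩ ⟨j', k', m', n'⟩ h
  simp only [shearIndex, Prod.mk.injEq] at h
  obtain ⟨⟨⟨rfl, rfl⟩, hslope⟩, rfl⟩ := h
  simpa using hslope

theorem linearIndependent_shearlet (hφc : Continuous φ) (hφ : φ ≠ 0) (hφb : BddBelow (support φ))
    (hψb : BddBelow (support ψ)) (hc₂ : c₂ ≠ 0)
    (hψ : LinearIndependent ℂ fun (p : ℕ × ℤ) (x : ℝ) => ψ ((2 : ℝ) ^ p.1 * x - c₁ * p.2)) :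
    LinearIndependent ℂ (shearlet φ ψ c₁ c₂) := by
  have hshear := linearIndependent_smul_shear
    (h := fun (p : ℕ × ℤ) (n : ℤ) y => φ ((2 : ℝ) ^ (p.1 / 2) * y - c₂ * n)) hψ
    (fun p => bddBelow_support_comp_mul_sub hψb (by positivity) _) (fun p n => by fun_prop)
    (fun p => linearIndependent_comp_mul_sub_mul_intCast hφ hφb (by positivity) hc₂)
  have hscale (p : ℕ × ℤ × ℤ × ℤ) : (((2 : ℝ) ^ ((3 * (p.1 : ℝ)) / 4) : ℝ) : ℂ) ≠ 0 :=
    Complex.ofReal_ne_zero.2 (by positivity)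
  rw [funext shearlet_eq_smul_shear]
  exact (hshear.comp shearIndex shearIndex_injective).units_smul fun p => Units.mk0 _ (hscale p)

theorem stmt3_general (hφc : Continuous φ) (hφ : φ ≠ 0) (hφb : BddBelow (support φ))
    (hψc : Continuous ψ) (hψb : BddBelow (support ψ)) (hc₂ : c₂ ≠ 0)
    (hψ : LinearIndependent ℂ fun (p : ℕ × ℤ) (x : ℝ) => ψ ((2 : ℝ) ^ p.1 * x - c₁ * p.2))
    (S : Finset (ℕ × ℤ × ℤ × ℤ)) (α : ℕ × ℤ × ℤ × ℤ → ℂ)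
    (hzero : (fun x : ℝ × ℝ => ∑ p ∈ S, α p * shearlet φ ψ c₁ c₂ p x) =ᵐ[volume] 0) :
    ∀ p ∈ S, α p = 0 := by
  have hcont : Continuous fun x : ℝ × ℝ => ∑ p ∈ S, α p * shearlet φ ψ c₁ c₂ p x :=
    continuous_finsetSum _ fun p _ => continuous_const.mul (continuous_shearlet hφc hψc p)
  have hsum := (hcont.ae_eq_iff_eq volume continuous_zero).1 hzero
  refine linearIndependent_iff'.1 (linearIndependent_shearlet hφc hφ hφb hψb hc₂ hψ) S α ?_
  ext x
  simpa using congrFun hsum x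

end Shearlet

/-- Under the admissibility hypotheses, the shearlet cone family
`Ψ(ψ, c) = {ψ_{j,k,m}}` with
`ψ_{j,k,m}(x₁,x₂) = 2^(3j/4) ψ¹(2^j x₁ + 2^⌊j/2⌋ k x₂ - c₁ m₁) φ¹(2^⌊j/2⌋ x₂ - c₂ m₂)`,
`j ∈ ℕ`, `|k| ≤ 2^⌊j/2⌋`, `m ∈ ℤ²`, is linearly independent in `L²(ℝ²)`. -/
theorem stmt3
    -- admissibility hypotheses on φ¹ (= φ) and ψ¹ (= ψ)
    (s : ℝ) (hs : 0 < s) (φ ψ : ℝ → ℂ)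
    (hφc : Continuous φ) (hφsupp : tsupport φ = Set.Icc 0 s)
    (hφON : ∀ m m' : ℤ,
      (∫ x : ℝ, (starRingEnd ℂ) (φ (x - m)) * φ (x - m')) = if m = m' then 1 else 0)
    (hψc : Continuous ψ) (hψcs : HasCompactSupport ψ)
    (hψorth : ∀ (j j' : ℕ) (l l' : ℤ), (j, l) ≠ (j', l') →
      (∫ x : ℝ, (starRingEnd ℂ) (ψ ((2 : ℝ) ^ j * x - l)) * ψ ((2 : ℝ) ^ j' * x - l')) = 0)
    (hψne : ∀ (j : ℕ) (l : ℤ), (fun x : ℝ => ψ ((2 : ℝ) ^ j * x - l)) ≠ 0)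
    (hψspan : ∀ (J j : ℕ), j ≤ J → ∀ l : ℤ, ∀ ε : ℝ, 0 < ε →
      ∃ (F : Finset ℤ) (a : ℤ → ℂ),
        eLpNorm (fun x : ℝ =>
            ψ ((2 : ℝ) ^ j * x - l) - ∑ k ∈ F, a k * φ ((2 : ℝ) ^ (J + 1) * x - k)) 2 volume
          < ENNReal.ofReal ε)
    -- sampling constants
    (a₁ b₁ a₂ b₂ : ℕ) (ha₁ : 0 < a₁) (ha₂ : 0 < a₂) (hb₁ : 0 < b₁) (hb₂ : 0 < b₂)
    (hb₁odd : Odd b₁) (hb₂odd : Odd b₂)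
    (c₁ c₂ : ℝ) (hc₁ : c₁ = (a₁ : ℝ) / b₁) (hc₂ : c₂ = (a₂ : ℝ) / b₂)
    -- linear independence of the sampled 1D wavelet system
    (h1d : ∀ c : ℝ, (c = c₁ ∨ c = c₂) →
      ∀ (F : Finset ℤ) (G : Finset (ℕ × ℤ)) (α : ℤ → ℂ) (β : ℕ × ℤ → ℂ),
        (fun x : ℝ => ∑ m ∈ F, α m * φ (x - c * m) +
            ∑ p ∈ G, β p * ψ ((2 : ℝ) ^ p.1 * x - c * p.2)) = 0 →
        (∀ m ∈ F, α m = 0) ∧ ∀ p ∈ G, β p = 0) :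
    -- conclusion: linear independence of the cone Ψ(ψ, c) in L²(ℝ²)
    ∀ (S : Finset (ℕ × ℤ × ℤ × ℤ)) (α : ℕ × ℤ × ℤ × ℤ → ℂ),
      (∀ p ∈ S, |p.2.1| ≤ (2 : ℤ) ^ (p.1 / 2)) →
      (fun x : ℝ × ℝ => ∑ p ∈ S, α p *
          ((((2 : ℝ) ^ ((3 * (p.1 : ℝ)) / 4) : ℝ) : ℂ) *
            ψ ((2 : ℝ) ^ p.1 * x.1 + (2 : ℝ) ^ (p.1 / 2) * (p.2.1 : ℝ) * x.2 - c₁ * p.2.2.1) *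
            φ ((2 : ℝ) ^ (p.1 / 2) * x.2 - c₂ * p.2.2.2)))
        =ᵐ[volume] 0 →
      ∀ p ∈ S, α p = 0 := by
  intro S α _
  have hφ : φ ≠ 0 := tsupport_eq_empty_iff.not.1 (hφsupp ▸ (Set.nonempty_Icc.2 hs.le).ne_empty)
  have hφb : BddBelow (Function.support φ) := bddBelow_Icc.mono (hφsupp ▸ subset_tsupport φ)
  have hψb : BddBelow (Function.support ψ) := hψcs.isCompact.bddBelow.mono (subset_tsupport ψ)
  have hc₂0 : c₂ ≠ 0 := hc₂ ▸ by positivity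
  refine stmt3_general hφc hφ hφb hψc hψb hc₂0 (linearIndependent_iff'.2 fun G β hβ => ?_) S α
  exact (h1d c₁ (.inl rfl) ∅ G 0 β (by ext x; simpa using congrFun hβ x)).2
end

section
/- Assume the admissibility hypotheses on φ¹, ψ¹, c₁, c₂. Then the 'unsheared' family Γ₃, consisting of the functions (x₁, x₂) ↦ φ¹(x₁ − c₁ m₁) φ¹(x₂ − c₁ m₂) for m ∈ ℤ², the functions ψ_{j,0,m}(x₁, x₂) = 2^{3j/4} ψ¹(2^j x₁ − c₁ m₁) φ¹(2^{⌊j/2⌋} x₂ − c₂ m₂) for j ∈ ℕ and m ∈ ℤ², and the functions ψ̃_{j,0,m}(x₁, x₂) = 2^{3j/4} φ¹(2^{⌊j/2⌋} x₁ − c₂ m₁) ψ¹(2^j x₂ − c₁ m₂) for j ∈ ℕ and m ∈ ℤ², is linearly independent as a family in L²(ℝ²) indexed by these parameters. -/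
open MeasureTheory

/-!
For the translation action of the group algebra `𝕜[ℝ]` on functions, a nonzero function with
support bounded below is annihilated by no nonzero element. Being compactly supported and in the
closed span of the orthogonal translates of `φ(2ⁿ⁺¹ ·)`, `ψ` is a finite combination of them. If a
combination of translates of `ψ(2 ·)` along a lattice `H` equals one of translates of `ψ` along `H`,
comparing coset components in the group algebra yields a nonzero relation whose shifts differ by
dyadic numbers in `H`; as the denominator `b` is odd, these are integral at the finer scale, and
orthogonality kills the relation. Multiplying by the element that carries `φ` to a dilate of `ψ`
extends this from `ψ` to `φ`: a sampled combination of `φ(2ᵏ ·)` lying in the span of all sampled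
wavelets only involves the wavelet scales below `k`.

In the tensor product of the function space with itself, take a vanishing combination of
`f ⊗ f`, `p j ⊗ q j` and `q j ⊗ p j`. Projecting one factor modulo all wavelets and the other onto
scale `j` shows that the `q j`-part of the last sum lies in the span of the wavelets, hence in that
of scales below `j`; so the top scale can be read off and removed.
-/

open scoped TensorProduct

section TensorProduct

local notation F "⊗ₛ" G => Submodule.map₂ (TensorProduct.mk _ _ _) F G

variable {K V W V' W' : Type*} [Field K] [AddCommGroup V] [Module K V] [AddCommGroup W] [Module K W]
  [AddCommGroup V'] [Module K V'] [AddCommGroup W'] [Module K W']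

lemma tensor_map_congr {F : Submodule K V} {G : Submodule K W} {T T' : V →ₗ[K] V'}
    {U U' : W →ₗ[K] W'} (hT : ∀ x ∈ F, T x = T' x) (hU : ∀ y ∈ G, U y = U' y)
    {z : V ⊗[K] W} (hz : z ∈ F ⊗ₛ G) : TensorProduct.map T U z = TensorProduct.map T' U' z := by
  have hle : (F ⊗ₛ G) ≤ LinearMap.eqLocus (TensorProduct.map T U) (TensorProduct.map T' U') :=
    Submodule.map₂_le.2 fun x hx y hy => by
      rw [LinearMap.mem_eqLocus, TensorProduct.mk_apply, TensorProduct.map_tmul,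
        TensorProduct.map_tmul, hT x hx, hU y hy]
  exact hle hz

lemma tensor_map_eq_self {F : Submodule K V} {G : Submodule K W} {T : V →ₗ[K] V} {U : W →ₗ[K] W}
    (hT : ∀ x ∈ F, T x = x) (hU : ∀ y ∈ G, U y = y) {z : V ⊗[K] W} (hz : z ∈ F ⊗ₛ G) :
    TensorProduct.map T U z = z := by
  rw [tensor_map_congr (T' := .id) (U' := .id) hT hU hz, TensorProduct.map_id, LinearMap.id_apply]

lemma tensor_map_eq_zero_of_left {F : Submodule K V} {G : Submodule K W} {T : V →ₗ[K] V'}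
    (hT : F ≤ LinearMap.ker T) (U : W →ₗ[K] W') {z : V ⊗[K] W} (hz : z ∈ F ⊗ₛ G) :
    TensorProduct.map T U z = 0 := by
  rw [tensor_map_congr (T' := 0) (U' := U) hT (fun _ _ => rfl) hz, TensorProduct.map_zero_left,
    LinearMap.zero_apply]

lemma tensor_map_eq_zero_of_right {F : Submodule K V} {G : Submodule K W} (T : V →ₗ[K] V')
    {U : W →ₗ[K] W'} (hU : G ≤ LinearMap.ker U) {z : V ⊗[K] W} (hz : z ∈ F ⊗ₛ G) :
    TensorProduct.map T U z = 0 := by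
  rw [tensor_map_congr (T' := T) (U' := 0) (fun _ _ => rfl) hU hz, TensorProduct.map_zero_right,
    LinearMap.zero_apply]

lemma tensor_comm_mem {F : Submodule K V} {G : Submodule K W} {z : V ⊗[K] W} (hz : z ∈ F ⊗ₛ G) :
    TensorProduct.comm K V W z ∈ G ⊗ₛ F := by
  have hle : (F ⊗ₛ G) ≤ (G ⊗ₛ F).comap (TensorProduct.comm K V W).toLinearMap :=
    Submodule.map₂_le.2 fun x hx y hy => Submodule.apply_mem_map₂ (TensorProduct.mk K W V) hy hx
  exact hle hz

lemma exists_factor_on_submodule {Q : Submodule K V} {π : V →ₗ[K] W} {T : V →ₗ[K] V'}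
    (h : Q ⊓ LinearMap.ker π ≤ LinearMap.ker T) : ∃ S : W →ₗ[K] V', ∀ x ∈ Q, T x = S (π x) := by
  have hker : LinearMap.ker (π.domRestrict Q) ≤ LinearMap.ker (T.domRestrict Q) :=
    fun x hx => h ⟨x.2, hx⟩
  obtain ⟨S, hS⟩ := LinearMap.exists_extend (((LinearMap.ker (π.domRestrict Q)).liftQ
    (T.domRestrict Q) hker) ∘ₗ ((π.domRestrict Q).quotKerEquivRange.symm.toLinearMap))
  refine ⟨S, fun x hx => ?_⟩
  have := LinearMap.congr_fun hS ⟨π x, LinearMap.mem_range_self (π.domRestrict Q) ⟨x, hx⟩⟩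
  have hsymm : (π.domRestrict Q).quotKerEquivRange.symm
      ⟨π x, LinearMap.mem_range_self (π.domRestrict Q) ⟨x, hx⟩⟩ =
        Submodule.Quotient.mk ⟨x, hx⟩ := by
    rw [LinearEquiv.symm_apply_eq]
    rfl
  simpa [hsymm] using this.symm

lemma tensor_map_eq_zero_of_inf_ker_le {Q : Submodule K V} {G : Submodule K W} {π : V →ₗ[K] V'}
    {T : V →ₗ[K] V} (h : Q ⊓ LinearMap.ker π ≤ LinearMap.ker T) {z : V ⊗[K] W} (hz : z ∈ Q ⊗ₛ G)
    (hπ : TensorProduct.map π (.id : W →ₗ[K] W) z = 0) :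
    TensorProduct.map T (.id : W →ₗ[K] W) z = 0 := by
  obtain ⟨S, hS⟩ := exists_factor_on_submodule h
  rw [tensor_map_congr (T' := S ∘ₗ π) (U := .id) (U' := .id ∘ₗ .id) hS (fun _ _ => rfl) hz,
    TensorProduct.map_comp, LinearMap.comp_apply, hπ, map_zero]

lemma exists_linearMap_apply_eq {ι : Type*} {v : ι → V} (hv : LinearIndependent K v) (w : ι → W) :
    ∃ T : V →ₗ[K] W, ∀ i, T (v i) = w i := by
  obtain ⟨T, hT⟩ := LinearMap.exists_extend ((Module.Basis.span hv).constr K w)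
  refine ⟨T, fun i => ?_⟩
  have := LinearMap.congr_fun hT (Module.Basis.span hv i)
  rwa [Module.Basis.constr_basis, LinearMap.comp_apply, Submodule.subtype_apply,
    Module.Basis.span_apply] at this

/-- Linear maps `π i` that are the identity on `P i` and vanish on `P j` for `j ≠ i`,
used to read off single components from a relation between tensors. -/
structure SeparatingMaps {ι : Type*} (P : ι → Submodule K V) (π : ι → V →ₗ[K] V) : Prop where
  eq_self : ∀ i, ∀ x ∈ P i, π i x = x
  le_ker : ∀ i j, i ≠ j → P j ≤ LinearMap.ker (π i)

variable {τ : Type*} {P Q : τ → Submodule K V} {π : τ → V →ₗ[K] V} {b c : τ → V ⊗[K] V}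

lemma map_mkQ_eq_zero_of_sum_eq_zero (hπ : SeparatingMaps P π) {s : Finset τ}
    (hb : ∀ j, b j ∈ P j ⊗ₛ Q j) (hc : ∀ j, c j ∈ Q j ⊗ₛ P j)
    (hsum : ∑ j ∈ s, b j + ∑ j ∈ s, c j = 0) {j : τ} (hj : j ∈ s) :
    TensorProduct.map (⨆ i, P i).mkQ (.id : V →ₗ[K] V) (c j) = 0 := by
  have hPQ : ∀ i, P i ≤ LinearMap.ker (⨆ i, P i).mkQ := fun i => by
    rw [Submodule.ker_mkQ]; exact le_iSup P i
  have happly := congrArg (TensorProduct.map (⨆ i, P i).mkQ (π j)) hsum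
  rw [map_add, map_sum, map_sum, map_zero,
    Finset.sum_eq_zero fun i _ => tensor_map_eq_zero_of_left (hPQ i) (π j) (hb i), zero_add,
    Finset.sum_eq_single_of_mem j hj fun i _ hij =>
      tensor_map_eq_zero_of_right _ (hπ.le_ker j i hij.symm) (hc i)] at happly
  rw [← happly]
  exact tensor_map_congr (fun _ _ => rfl) (fun y hy => (hπ.eq_self j y hy).symm) (hc j)

lemma eq_zero_of_sum_eq_zero_of_max [LinearOrder τ] (hπ : SeparatingMaps P π)
    (hQ : ∀ j, Q j ⊓ ⨆ i, P i ≤ ⨆ i < j, P i) {s : Finset τ}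
    (hb : ∀ j, b j ∈ P j ⊗ₛ Q j) (hc : ∀ j, c j ∈ Q j ⊗ₛ P j)
    (hsum : ∑ j ∈ s, b j + ∑ j ∈ s, c j = 0) {J : τ} (hJ : J ∈ s) (hmax : ∀ j ∈ s, j ≤ J) :
    b J = 0 := by
  have hcJ : ∀ j ∈ s, TensorProduct.map (π J) (.id : V →ₗ[K] V) (c j) = 0 := fun j hj =>
    tensor_map_eq_zero_of_inf_ker_le (π := (⨆ i, P i).mkQ)
      (by
        rw [Submodule.ker_mkQ]
        exact (hQ j).trans (iSup₂_le fun i hi => hπ.le_ker J i (hi.trans_le (hmax j hj)).ne'))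
      (hc j) (map_mkQ_eq_zero_of_sum_eq_zero hπ hb hc hsum hj)
  have happly := congrArg (TensorProduct.map (π J) (.id : V →ₗ[K] V)) hsum
  rw [map_add, map_sum, map_sum, map_zero, Finset.sum_eq_zero hcJ, add_zero,
    Finset.sum_eq_single_of_mem J hJ fun i _ hij =>
      tensor_map_eq_zero_of_left (hπ.le_ker J i hij.symm) _ (hb i)] at happly
  rwa [tensor_map_eq_self (hπ.eq_self J) (fun _ _ => rfl) (hb J)] at happly

theorem eq_zero_of_sum_add_sum_eq_zero [LinearOrder τ] (hπ : SeparatingMaps P π)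
    (hQ : ∀ j, Q j ⊓ ⨆ i, P i ≤ ⨆ i < j, P i)
    (hb : ∀ j, b j ∈ P j ⊗ₛ Q j) (hc : ∀ j, c j ∈ Q j ⊗ₛ P j) (s : Finset τ)
    (hsum : ∑ j ∈ s, b j + ∑ j ∈ s, c j = 0) : ∀ j ∈ s, b j = 0 ∧ c j = 0 := by
  induction s using Finset.induction_on_max with
  | empty => simp
  | insert J s hlt ih =>
    have hmax : ∀ j ∈ insert J s, j ≤ J :=
      fun j hj => (Finset.mem_insert.1 hj).elim (·.le) fun hjs => (hlt j hjs).le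
    have hbJ : b J = 0 :=
      eq_zero_of_sum_eq_zero_of_max hπ hQ hb hc hsum (Finset.mem_insert_self J s) hmax
    have hcJ : c J = 0 := by
      have hswap := congrArg (TensorProduct.comm K V V) hsum
      rw [map_add, map_sum, map_sum, map_zero, add_comm] at hswap
      exact (LinearEquiv.map_eq_zero_iff _).1 <| eq_zero_of_sum_eq_zero_of_max hπ hQ
        (fun j => tensor_comm_mem (hc j)) (fun j => tensor_comm_mem (hb j)) hswap
        (Finset.mem_insert_self J s) hmax
    have hJs : J ∉ s := fun h => (hlt J h).false
    rw [Finset.sum_insert hJs, Finset.sum_insert hJs, hbJ, hcJ, zero_add, zero_add] at hsum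
    exact Finset.forall_mem_insert .. |>.2 ⟨⟨hbJ, hcJ⟩, ih hsum⟩

lemma span_range_le_iff {ι : Type*} {v : ι → V} {S : Submodule K V} :
    Submodule.span K (Set.range v) ≤ S ↔ ∀ i, v i ∈ S :=
  Submodule.span_le.trans Set.range_subset_iff

variable {ι κ μ : Type*} {f : ι → V} {p : τ → κ → V} {q : τ → μ → V}

lemma exists_separatingMaps
    (hp : LinearIndependent K fun r : τ × κ => p r.1 r.2) :
    ∃ π : τ → V →ₗ[K] V, SeparatingMaps (fun j => Submodule.span K (Set.range (p j))) π := by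
  classical
  choose π hπ using fun j => exists_linearMap_apply_eq hp
    fun r : τ × κ => if r.1 = j then p r.1 r.2 else 0
  refine ⟨π, fun j x hx => ?_, fun i j hij => ?_⟩
  · have hle : Submodule.span K (Set.range (p j)) ≤ LinearMap.eqLocus (π j) .id :=
      span_range_le_iff.2 fun k => by simpa using hπ j (j, k)
    exact hle hx
  · exact span_range_le_iff.2 fun k => by simpa [hij.symm] using hπ i (j, k)

lemma eq_zero_of_add_sum_add_sum_eq_zero
    (hfp : LinearIndependent K (Sum.elim f fun r : τ × κ => p r.1 r.2))
    {a : V ⊗[K] V} {s : Finset τ}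
    (ha : a ∈ Submodule.span K (Set.range f) ⊗ₛ Submodule.span K (Set.range f))
    (hb : ∀ j, b j ∈ Submodule.span K (Set.range (p j)) ⊗ₛ Q j)
    (hc : ∀ j, c j ∈ Q j ⊗ₛ Submodule.span K (Set.range (p j)))
    (hsum : a + ∑ j ∈ s, b j + ∑ j ∈ s, c j = 0) : a = 0 := by
  obtain ⟨ρ, hρ⟩ := exists_linearMap_apply_eq hfp (Sum.elim f 0)
  have hρf : Submodule.span K (Set.range f) ≤ LinearMap.eqLocus ρ .id :=
    span_range_le_iff.2 fun i => hρ (.inl i)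
  have hρp : ∀ j, Submodule.span K (Set.range (p j)) ≤ LinearMap.ker ρ :=
    fun j => span_range_le_iff.2 fun k => hρ (.inr (j, k))
  have happly := congrArg (TensorProduct.map ρ ρ) hsum
  rw [map_add, map_add, map_sum, map_sum, map_zero,
    Finset.sum_eq_zero fun j _ => tensor_map_eq_zero_of_left (hρp j) ρ (hb j),
    Finset.sum_eq_zero fun j _ => tensor_map_eq_zero_of_right ρ (hρp j) (hc j),
    add_zero, add_zero] at happly
  rwa [tensor_map_eq_self hρf hρf ha] at happly

lemma sum_smul_tmul_mem {v : ι → V} {w : κ → W} (F : Finset (ι × κ)) (α : ι × κ → K) :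
    ∑ m ∈ F, α m • (v m.1 ⊗ₜ[K] w m.2) ∈
      Submodule.span K (Set.range v) ⊗ₛ Submodule.span K (Set.range w) :=
  Submodule.sum_mem _ fun m _ => Submodule.smul_mem _ _ <|
    Submodule.apply_mem_map₂ (TensorProduct.mk K V W) (Submodule.subset_span ⟨m.1, rfl⟩)
      (Submodule.subset_span ⟨m.2, rfl⟩)

lemma sum_eq_sum_slices (F : Finset (τ × κ)) {s : Finset τ} (hs : ∀ r ∈ F, r.1 ∈ s)
    (g : τ × κ → V) :
    ∑ r ∈ F, g r = ∑ j ∈ s, ∑ k ∈ F.preimage (Prod.mk j) (Prod.mk_right_injective j).injOn,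
      g (j, k) :=
  Finset.sum_finset_product F s _ fun r => by simpa using hs r

theorem coeff_eq_zero_of_sum_tmul_eq_zero [LinearOrder τ]
    (hfp : LinearIndependent K (Sum.elim f fun r : τ × κ => p r.1 r.2))
    (hq : ∀ j, LinearIndependent K (q j))
    (hQ : ∀ j, Submodule.span K (Set.range (q j)) ⊓ ⨆ i, Submodule.span K (Set.range (p i)) ≤
      ⨆ i < j, Submodule.span K (Set.range (p i)))
    {F₀ : Finset (ι × ι)} {F₁ : Finset (τ × κ × μ)} {F₂ : Finset (τ × μ × κ)}
    {α : ι × ι → K} {β : τ × κ × μ → K} {γ : τ × μ × κ → K}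
    (hsum : ∑ m ∈ F₀, α m • (f m.1 ⊗ₜ[K] f m.2) +
      ∑ r ∈ F₁, β r • (p r.1 r.2.1 ⊗ₜ[K] q r.1 r.2.2) +
      ∑ r ∈ F₂, γ r • (q r.1 r.2.1 ⊗ₜ[K] p r.1 r.2.2) = 0) :
    (∀ m ∈ F₀, α m = 0) ∧ (∀ r ∈ F₁, β r = 0) ∧ ∀ r ∈ F₂, γ r = 0 := by
  classical
  have hf : LinearIndependent K f := hfp.comp Sum.inl Sum.inl_injective
  have hp : ∀ j, LinearIndependent K (p j) := fun j =>
    hfp.comp (fun k => .inr (j, k)) (Sum.inr_injective.comp (Prod.mk_right_injective j))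
  have hs₁ : ∀ r ∈ F₁, r.1 ∈ F₁.image Prod.fst ∪ F₂.image Prod.fst := fun r hr =>
    Finset.mem_union_left _ (Finset.mem_image_of_mem _ hr)
  have hs₂ : ∀ r ∈ F₂, r.1 ∈ F₁.image Prod.fst ∪ F₂.image Prod.fst := fun r hr =>
    Finset.mem_union_right _ (Finset.mem_image_of_mem _ hr)
  rw [sum_eq_sum_slices F₁ hs₁, sum_eq_sum_slices F₂ hs₂] at hsum
  have hα := eq_zero_of_add_sum_add_sum_eq_zero hfp (sum_smul_tmul_mem F₀ α)
    (fun j => sum_smul_tmul_mem _ fun m => β (j, m))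
    (fun j => sum_smul_tmul_mem _ fun m => γ (j, m)) hsum
  obtain ⟨π, hπ⟩ := exists_separatingMaps (hfp.comp Sum.inr Sum.inr_injective)
  rw [hα, zero_add] at hsum
  have hslice := eq_zero_of_sum_add_sum_eq_zero hπ hQ
    (fun j => sum_smul_tmul_mem _ fun m => β (j, m))
    (fun j => sum_smul_tmul_mem _ fun m => γ (j, m)) _ hsum
  exact ⟨linearIndependent_iff'.1 (hf.tmul_of_isDomain hf) F₀ α hα,
    fun r hr => linearIndependent_iff'.1 ((hp r.1).tmul_of_isDomain (hq r.1)) _ _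
      (hslice r.1 (hs₁ r hr)).1 r.2 (Finset.mem_preimage.2 hr),
    fun r hr => linearIndependent_iff'.1 ((hq r.1).tmul_of_isDomain (hp r.1)) _ _
      (hslice r.1 (hs₂ r hr)).2 r.2 (Finset.mem_preimage.2 hr)⟩

/-- The linear map sending `f ⊗ g` to the function `(x, y) ↦ f x * g y`, which identifies relations
between product functions with relations between tensors. -/
def tensorToFun (K X Y : Type*) [Field K] : (X → K) ⊗[K] (Y → K) →ₗ[K] X × Y → K :=
  TensorProduct.lift <| LinearMap.mk₂ K (fun f g z => f z.1 * g z.2)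
    (fun _ _ _ => funext fun _ => add_mul _ _ _) (fun _ _ _ => funext fun _ => mul_assoc _ _ _)
    (fun _ _ _ => funext fun _ => mul_add _ _ _)
    (fun _ _ _ => funext fun _ => mul_left_comm _ _ _)

lemma tensorToFun_tmul_apply {X Y : Type*} (f : X → K) (g : Y → K) (z : X × Y) :
    tensorToFun K X Y (f ⊗ₜ g) z = f z.1 * g z.2 := rfl

lemma tensorToFun_injective (X Y : Type*) : Function.Injective (tensorToFun K X Y) := by
  refine (injective_iff_map_eq_zero _).2 fun t ht => ?_
  let B := Module.Basis.ofVectorSpace K (X → K)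
  obtain ⟨c, rfl⟩ := TensorProduct.eq_repr_basis_left B t
  have hc : c = 0 := by
    ext i y
    have hy : ∑ i ∈ c.support, c i y • B i = 0 := by
      funext x
      have := congrFun ht (x, y)
      simpa [Finsupp.sum, tensorToFun_tmul_apply, mul_comm] using this
    by_cases hi : i ∈ c.support
    · exact linearIndependent_iff'.1 B.linearIndependent _ _ hy i hi
    · rw [Finsupp.notMem_support_iff.1 hi, Finsupp.zero_apply]
  rw [hc, Finsupp.sum_zero_index]

theorem coeff_eq_zero_of_sum_mul_eq_zero [LinearOrder τ] {X : Type*} {f : ι → X → K}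
    {p : τ → κ → X → K} {q : τ → μ → X → K}
    (hfp : LinearIndependent K (Sum.elim f fun r : τ × κ => p r.1 r.2))
    (hq : ∀ j, LinearIndependent K (q j))
    (hQ : ∀ j, Submodule.span K (Set.range (q j)) ⊓ ⨆ i, Submodule.span K (Set.range (p i)) ≤
      ⨆ i < j, Submodule.span K (Set.range (p i)))
    {F₀ : Finset (ι × ι)} {F₁ : Finset (τ × κ × μ)} {F₂ : Finset (τ × μ × κ)}
    {α : ι × ι → K} {β : τ × κ × μ → K} {γ : τ × μ × κ → K}
    (hsum : (fun z : X × X => ∑ m ∈ F₀, α m * (f m.1 z.1 * f m.2 z.2) +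
      ∑ r ∈ F₁, β r * (p r.1 r.2.1 z.1 * q r.1 r.2.2 z.2) +
      ∑ r ∈ F₂, γ r * (q r.1 r.2.1 z.1 * p r.1 r.2.2 z.2)) = 0) :
    (∀ m ∈ F₀, α m = 0) ∧ (∀ r ∈ F₁, β r = 0) ∧ ∀ r ∈ F₂, γ r = 0 := by
  refine coeff_eq_zero_of_sum_tmul_eq_zero hfp hq hQ (tensorToFun_injective X X ?_)
  rw [map_zero, ← hsum]
  funext z
  simp [tensorToFun_tmul_apply]

end TensorProduct

lemma inf_sup_le_of_disjoint {L : Type*} [Lattice L] [OrderBot L] [IsModularLattice L] {A P Q : L}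
    (h : Disjoint P (Q ⊔ A)) : Q ⊓ (A ⊔ P) ≤ A :=
  calc Q ⊓ (A ⊔ P) ≤ (A ⊔ P) ⊓ (Q ⊔ A) := le_inf inf_le_right (inf_le_left.trans le_sup_left)
    _ = A := by rw [sup_inf_assoc_of_le P le_sup_right, h.eq_bot, sup_bot_eq]

lemma inf_iSup_le_iSup_lt {L : Type*} [CompleteLattice L] [IsModularLattice L]
    [IsCompactlyGenerated L] {P : ℕ → L} {Q : L} {k : ℕ}
    (h : ∀ N ≥ k, Disjoint (P N) (Q ⊔ ⨆ i < N, P i)) : Q ⊓ ⨆ i, P i ≤ ⨆ i < k, P i := by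
  have hmono : Monotone fun N => ⨆ i < N, P i :=
    fun _ _ hNM => biSup_mono fun _ hi => hi.trans_le hNM
  have hle : ∀ N ≥ k, Q ⊓ ⨆ i < N, P i ≤ ⨆ i < k, P i := by
    intro N hN
    induction N, hN using Nat.le_induction with
    | base => exact inf_le_right
    | succ N hN ih =>
      rw [Nat.iSup_lt_succ]
      exact (le_inf inf_le_left (inf_sup_le_of_disjoint (h N hN))).trans ih
  rw [← biSup_lt_eq_iSup, (hmono.directed_le).inf_iSup_eq]
  refine iSup_le fun N => ?_
  exact (inf_le_inf_left Q (hmono (le_max_left N k))).trans (hle _ (le_max_right N k))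

section TranslationAction

variable {G K : Type*} [AddCommGroup G] [Field K]

/-- The action of the group algebra of `G` on functions on `G` by translation: the element
`single t c` sends `f` to `x ↦ c * f (x - t)`. -/
noncomputable def translation : AddMonoidAlgebra K G →ₐ[K] Module.End K (G → K) :=
  AddMonoidAlgebra.lift K _ G
    { toFun t := LinearMap.funLeft K K (· - t.toAdd)
      map_one' := LinearMap.ext fun f => funext fun x => by simp
      map_mul' s t := LinearMap.ext fun f => funext fun x => by simp [sub_add_eq_sub_sub] }

lemma translation_apply (p : AddMonoidAlgebra K G) (f : G → K) (x : G) :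
    translation p f x = ∑ t ∈ p.coeff.support, p.coeff t * f (x - t) := by
  simp [translation, AddMonoidAlgebra.lift_apply, Finsupp.sum]

lemma translation_single (t : G) (c : K) (f : G → K) :
    translation (AddMonoidAlgebra.single t c) f = fun x => c * f (x - t) := by
  funext x
  simp [translation, AddMonoidAlgebra.lift_single]

lemma translation_mul (p q : AddMonoidAlgebra K G) (f : G → K) :
    translation (p * q) f = translation p (translation q f) := by
  rw [map_mul, Module.End.mul_apply]

lemma translation_comm (p q : AddMonoidAlgebra K G) (f : G → K) :
    translation p (translation q f) = translation q (translation p f) := by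
  rw [← translation_mul, mul_comm, translation_mul]

lemma translation_mem_span {S : Set G} {p : AddMonoidAlgebra K G}
    (hp : ∀ t ∈ p.coeff.support, t ∈ S) (f : G → K) :
    translation p f ∈ Submodule.span K ((fun t x => f (x - t)) '' S) := by
  have hsum : translation p f = ∑ t ∈ p.coeff.support, p.coeff t • fun x => f (x - t) := by
    funext x
    simp [translation_apply]
  rw [hsum]
  exact Submodule.sum_mem _ fun t ht =>
    Submodule.smul_mem _ _ (Submodule.subset_span ⟨t, hp t ht, rfl⟩)

lemma translation_ne_zero {p : AddMonoidAlgebra K ℝ} (hp : p ≠ 0) {f : ℝ → K} (hf : f ≠ 0)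
    (hbdd : BddBelow (Function.support f)) : translation p f ≠ 0 := by
  have hsupp : p.coeff.support.Nonempty := by
    rw [Finsupp.support_nonempty_iff]
    simpa using hp
  have hne : (Function.support f).Nonempty := Function.support_nonempty_iff.2 hf
  set u := sInf (Function.support f)
  set t₀ := p.coeff.support.min' hsupp
  have ht₀ : t₀ ∈ p.coeff.support := Finset.min'_mem _ _
  -- Near the left end of its support, `τ_{t₀} f` does not meet the other translates.
  have hclear : ∀ᶠ y in nhds u, ∀ t ∈ p.coeff.support, t ≠ t₀ → y + t₀ - t < u :=
    (Finset.eventually_all _).2 fun t ht => by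
      rcases eq_or_ne t t₀ with rfl | htne
      · simp
      have hlt : t₀ < t := lt_of_le_of_ne (Finset.min'_le _ _ ht) htne.symm
      filter_upwards [eventually_lt_nhds (show u < u + (t - t₀) by linarith)] with y hy _
      linarith
  obtain ⟨y, hy, hyclear⟩ :=
    (((isGLB_csInf hne hbdd).frequently_nhds_mem hne).and_eventually hclear).exists
  intro hzero
  have hval := congrFun hzero (y + t₀)
  rw [translation_apply, Finset.sum_eq_single_of_mem t₀ ht₀, add_sub_cancel_right] at hval
  · exact mul_ne_zero (Finsupp.mem_support_iff.1 ht₀) hy hval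
  · intro t ht htne
    rw [Function.notMem_support.1 fun h => (csInf_le hbdd h).not_gt (hyclear t ht htne), mul_zero]

lemma translation_injective {f : ℝ → K} (hf : f ≠ 0) (hbdd : BddBelow (Function.support f)) :
    Function.Injective fun p : AddMonoidAlgebra K ℝ => translation p f := by
  intro p q hpq
  by_contra hne
  refine translation_ne_zero (sub_ne_zero.2 hne) hf hbdd ?_
  rw [map_sub, LinearMap.sub_apply, sub_eq_zero]
  exact hpq

end TranslationAction

section Cosets

variable {G K : Type*} [AddCommGroup G] [Field K]

/-- The elements of the group algebra supported in the subgroup `H`: the degree-zero part of the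
grading by cosets of `H`. -/
noncomputable def supportedIn (K : Type*) [Field K] (H : AddSubgroup G) :
    Subalgebra K (AddMonoidAlgebra K G) :=
  SetLike.GradeZero.subalgebra (AddMonoidAlgebra.gradeBy K (QuotientAddGroup.mk' H))

lemma mem_supportedIn {H : AddSubgroup G} {p : AddMonoidAlgebra K G} :
    p ∈ supportedIn K H ↔ ∀ t ∈ p.coeff.support, t ∈ H :=
  forall₂_congr fun t _ => QuotientAddGroup.eq_zero_iff t

lemma supportedIn_mono {H H' : AddSubgroup G} (h : H ≤ H') : supportedIn K H ≤ supportedIn K H' :=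
  fun _ hp => mem_supportedIn.2 fun t ht => h (mem_supportedIn.1 hp t ht)

lemma single_mem_supportedIn {H : AddSubgroup G} {t : G} (ht : t ∈ H) (c : K) :
    AddMonoidAlgebra.single t c ∈ supportedIn K H :=
  mem_supportedIn.2 fun u hu => by
    rwa [Finset.mem_singleton.1 (Finsupp.support_single_subset hu)]

lemma coeff_decompose_gradeBy {M ι : Type*} [AddMonoid M] [AddMonoid ι] [DecidableEq ι]
    (deg : M →+ ι) (d : AddMonoidAlgebra K M) (i : ι) (t : M) :
    (DirectSum.decompose (AddMonoidAlgebra.gradeBy K deg) d i : AddMonoidAlgebra K M).coeff t =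
      if deg t = i then d.coeff t else 0 := by
  classical
  induction d using AddMonoidAlgebra.induction_linear with
  | zero => simp
  | add d e hd he =>
    rw [DirectSum.decompose_add, DirectSum.add_apply, Submodule.coe_add, AddMonoidAlgebra.coeff_add,
      Finsupp.add_apply, hd, he, AddMonoidAlgebra.coeff_add, Finsupp.add_apply]
    split_ifs <;> simp
  | single m r =>
    rw [AddMonoidAlgebra.GradesBy.decompose_single, DirectSum.coe_of_apply]
    rcases eq_or_ne m t with rfl | hmt
    · split_ifs <;> simp
    · split_ifs <;> simp [hmt]

lemma exists_decompose_ne_zero {ι A σ : Type*} [DecidableEq ι] [AddCommMonoid A] [SetLike σ A]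
    [AddSubmonoidClass σ A] (𝒜 : ι → σ) [DirectSum.Decomposition 𝒜] {a : A} (ha : a ≠ 0) :
    ∃ i, (DirectSum.decompose 𝒜 a i : A) ≠ 0 := by
  classical
  contrapose! ha
  rw [← DirectSum.sum_support_decompose 𝒜 a]
  exact Finset.sum_eq_zero fun i _ => ha i

lemma decompose_mul_eq_decompose_mul {ι A σ : Type*} [DecidableEq ι] [AddMonoid ι] [CommRing A]
    [IsDomain A] [SetLike σ A] [AddSubmonoidClass σ A] (𝒜 : ι → σ) [GradedRing 𝒜] {p q d e : A}
    (hp : p ∈ 𝒜 0) (hq : q ∈ 𝒜 0) (hp0 : p ≠ 0) (h : p * d = q * e) (i : ι) :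
    (DirectSum.decompose 𝒜 d i : A) * e = DirectSum.decompose 𝒜 e i * d := by
  have hi : p * DirectSum.decompose 𝒜 d i = q * DirectSum.decompose 𝒜 e i := by
    rw [← DirectSum.coe_decompose_mul_of_left_mem_zero 𝒜 hp, h,
      DirectSum.coe_decompose_mul_of_left_mem_zero 𝒜 hq]
  apply mul_left_cancel₀ hp0
  linear_combination e * hi - DirectSum.decompose 𝒜 e i * h

lemma exists_coset_components [IsDomain (AddMonoidAlgebra K G)] {H Λ : AddSubgroup G}
    {p q d e : AddMonoidAlgebra K G} (hp : p ∈ supportedIn K H) (hq : q ∈ supportedIn K H)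
    (hp0 : p ≠ 0) (he0 : e ≠ 0) (h : p * d = q * e) (hd : d ∈ supportedIn K Λ)
    (he : e ∈ supportedIn K Λ) :
    ∃ d' e' : AddMonoidAlgebra K G, e' ≠ 0 ∧ d' * e = e' * d ∧
      ∀ t ∈ e'.coeff.support, ∀ t' ∈ d'.coeff.support, t - t' ∈ H ⊓ Λ := by
  classical
  obtain ⟨i, hi⟩ :=
    exists_decompose_ne_zero (AddMonoidAlgebra.gradeBy K (QuotientAddGroup.mk' H)) he0
  refine ⟨_, _, hi, decompose_mul_eq_decompose_mul _ hp hq hp0 h i, fun t ht t' ht' => ?_⟩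
  rw [Finsupp.mem_support_iff, coeff_decompose_gradeBy, ite_ne_right_iff] at ht ht'
  refine AddSubgroup.mem_inf.2 ⟨?_, sub_mem
    (mem_supportedIn.1 he t (Finsupp.mem_support_iff.2 ht.2))
    (mem_supportedIn.1 hd t' (Finsupp.mem_support_iff.2 ht'.2))⟩
  rw [← QuotientAddGroup.eq_zero_iff, ← QuotientAddGroup.mk'_apply, map_sub, ht.1, ht'.1, sub_self]

/-- The span of the translates of `f` along `H`, encoded as the functions `translation p f` with `p`
supported in `H` so that spans can be compared inside the group algebra. -/
noncomputable def translateSpan (H : AddSubgroup G) (f : G → K) : Submodule K (G → K) :=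
  (Subalgebra.toSubmodule (supportedIn K H)).map (translation.toLinearMap.flip f)

lemma mem_translateSpan {H : AddSubgroup G} {f g : G → K} :
    g ∈ translateSpan H f ↔ ∃ p ∈ supportedIn K H, translation p f = g := Iff.rfl

lemma translateSpan_mono {H H' : AddSubgroup G} (h : H ≤ H') (f : G → K) :
    translateSpan H f ≤ translateSpan H' f :=
  Submodule.map_mono (supportedIn_mono h)

lemma self_mem_translateSpan (H : AddSubgroup G) (f : G → K) : f ∈ translateSpan H f :=
  mem_translateSpan.2 ⟨1, one_mem _, by simp⟩

lemma translate_mem_translateSpan {H : AddSubgroup G} {t : G} (ht : t ∈ H) (f : G → K) :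
    (fun x => f (x - t)) ∈ translateSpan H f :=
  ⟨.single t 1, single_mem_supportedIn ht 1, by simpa using translation_single t 1 f⟩

lemma translation_mem_translateSpan {H : AddSubgroup G} {p : AddMonoidAlgebra K G} {f g : G → K}
    (hp : p ∈ supportedIn K H) (hg : g ∈ translateSpan H f) :
    translation p g ∈ translateSpan H f := by
  obtain ⟨q, hq, rfl⟩ := mem_translateSpan.1 hg
  exact mem_translateSpan.2 ⟨p * q, mul_mem hp hq, translation_mul p q f⟩

lemma translateSpan_le {H : AddSubgroup G} {f g : G → K} (hg : g ∈ translateSpan H f) :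
    translateSpan H g ≤ translateSpan H f := by
  intro v hv
  obtain ⟨p, hp, rfl⟩ := mem_translateSpan.1 hv
  exact translation_mem_translateSpan hp hg

lemma translation_mem_translateSpan_of_mem {H : AddSubgroup G} {p : AddMonoidAlgebra K G}
    {f g v : G → K} (hp : translation p f ∈ translateSpan H g) (hv : v ∈ translateSpan H f) :
    translation p v ∈ translateSpan H g := by
  obtain ⟨q, hq, rfl⟩ := mem_translateSpan.1 hv
  rw [translation_comm]
  exact translation_mem_translateSpan hq hp

lemma disjoint_translateSpan_of_map_le {H : AddSubgroup ℝ} {p : AddMonoidAlgebra K ℝ} {f : ℝ → K}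
    {A B : Submodule K (ℝ → K)} (hf : BddBelow (Function.support f)) (hp : p ∈ supportedIn K H)
    (hp0 : p ≠ 0) (hle : A.map (translation p) ≤ B) (h : Disjoint (translateSpan H f) B) :
    Disjoint (translateSpan H f) A := by
  rw [Submodule.disjoint_def] at h ⊢
  intro v hv hvA
  have hpv : translation p v = 0 :=
    h _ (translation_mem_translateSpan hp hv) (hle (Submodule.mem_map_of_mem hvA))
  obtain ⟨q, -, rfl⟩ := mem_translateSpan.1 hv
  rcases eq_or_ne f 0 with rfl | hf0
  · exact map_zero _
  have hpq : p * q = 0 := translation_injective hf0 hf (by simp [hpv])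
  rw [(mul_eq_zero.1 hpq).resolve_left hp0, map_zero, LinearMap.zero_apply]

end Cosets

section ContinuousCompactSupport

variable {X 𝕜 : Type*} [TopologicalSpace X] [RCLike 𝕜]

/-- The continuous functions with compact support, as a submodule of all functions; on it, equality
in `L²` is equality of functions. -/
def continuousCompactSupport (X 𝕜 : Type*) [TopologicalSpace X] [RCLike 𝕜] :
    Submodule 𝕜 (X → 𝕜) where
  carrier := {f | Continuous f ∧ HasCompactSupport f}
  zero_mem' := ⟨continuous_zero, HasCompactSupport.zero⟩
  add_mem' hf hg := ⟨hf.1.add hg.1, hf.2.add hg.2⟩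
  smul_mem' c _ hf := ⟨hf.1.const_smul c, hf.2.smul_left⟩

lemma exists_linearMap_eq_toLp {X E : Type*} [MeasurableSpace X] [NormedAddCommGroup E]
    [NormedSpace 𝕜 E] (p : ENNReal) (μ : Measure X) :
    ∃ T : (X → E) →ₗ[𝕜] Lp E p μ, ∀ f (hf : MemLp f p μ), T f = hf.toLp f := by
  let S : Submodule 𝕜 (X → E) :=
    { carrier := {f | MemLp f p μ}
      zero_mem' := MemLp.zero
      add_mem' := MemLp.add
      smul_mem' := fun c _ hf => hf.const_smul c }
  obtain ⟨T, hT⟩ := LinearMap.exists_extend (p := S)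
    { toFun := fun f => f.2.toLp f.1
      map_add' := fun f g => MemLp.toLp_add f.2 g.2
      map_smul' := fun c f => MemLp.toLp_const_smul c f.2 }
  exact ⟨T, fun f hf => LinearMap.congr_fun hT ⟨f, hf⟩⟩

lemma exists_linearMap_L2 [MeasurableSpace X] [OpensMeasurableSpace X] (𝕜 : Type*) [RCLike 𝕜]
    (μ : Measure X) [IsFiniteMeasureOnCompacts μ] [μ.IsOpenPosMeasure] :
    ∃ T : (X → 𝕜) →ₗ[𝕜] Lp 𝕜 2 μ, Set.InjOn T (continuousCompactSupport X 𝕜) ∧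
      (∀ f ∈ continuousCompactSupport X 𝕜, ‖T f‖ = (eLpNorm f 2 μ).toReal) ∧
      ∀ f ∈ continuousCompactSupport X 𝕜, ∀ g ∈ continuousCompactSupport X 𝕜,
        inner 𝕜 (T f) (T g) = ∫ x, starRingEnd 𝕜 (f x) * g x ∂μ := by
  obtain ⟨T, hT⟩ := exists_linearMap_eq_toLp (𝕜 := 𝕜) (E := 𝕜) 2 μ
  have hmem : ∀ f ∈ continuousCompactSupport X 𝕜, MemLp f 2 μ :=
    fun f hf => hf.1.memLp_of_hasCompactSupport hf.2
  refine ⟨T, fun f hf g hg hfg => ?_, fun f hf => ?_, fun f hf g hg => ?_⟩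
  · rw [hT f (hmem f hf), hT g (hmem g hg), MemLp.toLp_eq_toLp_iff] at hfg
    exact (Continuous.ae_eq_iff_eq μ hf.1 hg.1).1 hfg
  · rw [hT f (hmem f hf), Lp.norm_toLp]
  · rw [hT f (hmem f hf), hT g (hmem g hg), L2.inner_def]
    refine integral_congr_ae ?_
    filter_upwards [(hmem f hf).coeFn_toLp, (hmem g hg).coeFn_toLp] with x hfx hgx
    rw [hfx, hgx, RCLike.inner_apply']

lemma eq_zero_of_mem_span_of_integral_eq_zero [MeasurableSpace X] [OpensMeasurableSpace X]
    (μ : Measure X) [IsFiniteMeasureOnCompacts μ] [μ.IsOpenPosMeasure] {S S' : Set (X → 𝕜)}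
    (hS : S ⊆ continuousCompactSupport X 𝕜) (hS' : S' ⊆ continuousCompactSupport X 𝕜)
    (horth : ∀ f ∈ S, ∀ g ∈ S', ∫ x, starRingEnd 𝕜 (f x) * g x ∂μ = 0) {u : X → 𝕜}
    (hu : u ∈ Submodule.span 𝕜 S) (hu' : u ∈ Submodule.span 𝕜 S') : u = 0 := by
  obtain ⟨T, hinj, -, hinner⟩ := exists_linearMap_L2 𝕜 μ
  have hspan : Submodule.span 𝕜 (T '' S) ⟂ Submodule.span 𝕜 (T '' S') := by
    rw [Submodule.isOrtho_span]
    rintro _ ⟨f, hf, rfl⟩ _ ⟨g, hg, rfl⟩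
    rw [hinner f (hS hf) g (hS' hg), horth f hf g hg]
  have hTu : T u = 0 := by
    rw [← Submodule.mem_bot 𝕜, ← hspan.disjoint.eq_bot, Submodule.span_image, Submodule.span_image]
    exact ⟨Submodule.mem_map_of_mem hu, Submodule.mem_map_of_mem hu'⟩
  exact hinj (Submodule.span_le.2 hS hu) (Submodule.zero_mem _) (hTu.trans (map_zero T).symm)

lemma mem_span_image_of_mem_closure_span {E ι : Type*} [NormedAddCommGroup E]
    [InnerProductSpace 𝕜 E] {v : ι → E} (hv : Pairwise fun i j => inner 𝕜 (v i) (v j) = 0)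
    {x : E} (hx : x ∈ (Submodule.span 𝕜 (Set.range v)).topologicalClosure) {s : Set ι}
    (hs : s.Finite) (hxs : ∀ i ∉ s, inner 𝕜 (v i) x = 0) : x ∈ Submodule.span 𝕜 (v '' s) := by
  have := FiniteDimensional.span_of_finite 𝕜 (hs.image v)
  obtain ⟨y, hy, z, hz, rfl⟩ :=
    Submodule.exists_add_mem_mem_orthogonal (K := Submodule.span 𝕜 (v '' s)) x
  have hvz : ∀ i, inner 𝕜 (v i) z = 0 := fun i => by
    by_cases hi : i ∈ s
    · exact Submodule.inner_right_of_mem_orthogonal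
        (Submodule.subset_span (Set.mem_image_of_mem v hi)) hz
    have hvy : Submodule.span 𝕜 {v i} ⟂ Submodule.span 𝕜 (v '' s) := by
      rw [Submodule.isOrtho_span]
      rintro _ rfl _ ⟨j, hj, rfl⟩
      exact hv fun hij => hi (hij ▸ hj)
    simpa [inner_add_right, hvy.inner_eq (Submodule.mem_span_singleton_self _) hy] using hxs i hi
  have hzcl : z ∈ (Submodule.span 𝕜 (Set.range v)).topologicalClosure := by
    have hycl := Submodule.le_topologicalClosure _
      (Submodule.span_mono (Set.image_subset_range v s) hy)
    simpa using Submodule.sub_mem _ hx hycl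
  have hzorth : z ∈ (Submodule.span 𝕜 (Set.range v)).topologicalClosureᗮ := by
    rw [Submodule.orthogonal_closure]
    exact Submodule.isOrtho_span.2 (by rintro _ rfl _ ⟨i, rfl⟩; exact inner_eq_zero_symm.1 (hvz i))
      (Submodule.mem_span_singleton_self z)
  have hz0 : z = 0 := by
    rw [← Submodule.mem_bot 𝕜, ← Submodule.inf_orthogonal_eq_bot]
    exact ⟨hzcl, hzorth⟩
  rwa [hz0, add_zero]

lemma mem_span_range_of_eLpNorm_sub_lt {ι : Type*} [MeasurableSpace X] [OpensMeasurableSpace X]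
    (μ : Measure X) [IsFiniteMeasureOnCompacts μ] [μ.IsOpenPosMeasure] {e : ι → X → 𝕜}
    (he : ∀ k, e k ∈ continuousCompactSupport X 𝕜)
    (horth : Pairwise fun k l => ∫ x, starRingEnd 𝕜 (e k x) * e l x ∂μ = 0)
    {f : X → 𝕜} (hf : f ∈ continuousCompactSupport X 𝕜)
    (hfin : {k | ∫ x, starRingEnd 𝕜 (e k x) * f x ∂μ ≠ 0}.Finite)
    (happrox : ∀ ε : ℝ, 0 < ε → ∃ g ∈ Submodule.span 𝕜 (Set.range e),
      eLpNorm (f - g) 2 μ < ENNReal.ofReal ε) :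
    f ∈ Submodule.span 𝕜 (Set.range e) := by
  obtain ⟨T, hinj, hnorm, hinner⟩ := exists_linearMap_L2 𝕜 μ
  have hle : Submodule.span 𝕜 (Set.range e) ≤ continuousCompactSupport X 𝕜 :=
    Submodule.span_le.2 (Set.range_subset_iff.2 he)
  have hmap : Submodule.span 𝕜 (Set.range (T ∘ e)) = (Submodule.span 𝕜 (Set.range e)).map T := by
    rw [Set.range_comp, Submodule.span_image]
  have hclosure : T f ∈ (Submodule.span 𝕜 (Set.range (T ∘ e))).topologicalClosure := by
    refine SeminormedAddCommGroup.mem_closure_iff.2 fun ε hε => ?_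
    obtain ⟨g, hg, hfg⟩ := happrox ε hε
    refine ⟨T g, hmap ▸ Submodule.mem_map_of_mem hg, ?_⟩
    rw [← map_sub, hnorm _ (Submodule.sub_mem _ hf (hle hg))]
    exact (ENNReal.lt_ofReal_iff_toReal_lt hfg.ne_top).1 hfg
  have hTf : T f ∈ Submodule.span 𝕜 (Set.range (T ∘ e)) :=
    Submodule.span_mono (Set.image_subset_range _ _) <|
      mem_span_image_of_mem_closure_span
        (fun k l hkl => (hinner _ (he k) _ (he l)).trans (horth hkl)) hclosure hfin
        fun k hk => (hinner _ (he k) f hf).trans (not_not.1 hk)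
  rw [hmap] at hTf
  obtain ⟨g, hg, hgf⟩ := hTf
  exact hinj (hle hg) hf hgf ▸ hg

end ContinuousCompactSupport

section TwoScale

variable {𝕜 : Type*} [RCLike 𝕜]

lemma comp_mul_sub_mem_continuousCompactSupport {f : ℝ → 𝕜}
    (hf : f ∈ continuousCompactSupport ℝ 𝕜) {a : ℝ} (ha : a ≠ 0) (b : ℝ) :
    (fun x => f (a * x - b)) ∈ continuousCompactSupport ℝ 𝕜 :=
  ⟨hf.1.comp (by fun_prop),
    hf.2.comp_homeomorph ((Homeomorph.mulLeft₀ a ha).trans (Homeomorph.subRight b))⟩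

lemma finite_setOf_integral_comp_mul_sub_ne_zero {f g : ℝ → 𝕜} (hf : HasCompactSupport f)
    (hg : HasCompactSupport g) (a : ℝ) :
    {k : ℤ | ∫ x : ℝ, starRingEnd 𝕜 (f (a * x - k)) * g x ≠ 0}.Finite := by
  have hcompact : IsCompact ((fun z : ℝ × ℝ => a * z.2 - z.1) '' (tsupport f ×ˢ tsupport g)) :=
    (hf.isCompact.prod hg.isCompact).image (by fun_prop)
  refine (Int.isClosedEmbedding_coe_real.isCompact_preimage hcompact).finite_of_discrete.subset ?_
  intro k hk
  obtain ⟨x, hx⟩ : ∃ x : ℝ, starRingEnd 𝕜 (f (a * x - k)) * g x ≠ 0 := by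
    contrapose! hk
    simp [hk]
  have hfx : f (a * x - k) ≠ 0 := fun h => hx (by rw [h, map_zero, zero_mul])
  exact ⟨(a * x - k, x), ⟨subset_tsupport f hfx, subset_tsupport g (right_ne_zero_of_mul hx)⟩,
    sub_sub_cancel _ _⟩

lemma mem_span_range_comp_mul_sub_intCast {f g : ℝ → 𝕜} (hf : f ∈ continuousCompactSupport ℝ 𝕜)
    (hg : g ∈ continuousCompactSupport ℝ 𝕜)
    (horth : Pairwise fun m n : ℤ => ∫ x : ℝ, starRingEnd 𝕜 (f (x - m)) * f (x - n) = 0)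
    {a : ℝ} (ha : a ≠ 0)
    (happrox : ∀ ε : ℝ, 0 < ε → ∃ (F : Finset ℤ) (α : ℤ → 𝕜),
      eLpNorm (fun x => g x - ∑ k ∈ F, α k * f (a * x - k)) 2 volume < ENNReal.ofReal ε) :
    g ∈ Submodule.span 𝕜 (Set.range fun (k : ℤ) x => f (a * x - k)) := by
  refine mem_span_range_of_eLpNorm_sub_lt volume
    (fun k : ℤ => comp_mul_sub_mem_continuousCompactSupport hf ha k) (fun m n hmn => ?_) hg
    (finite_setOf_integral_comp_mul_sub_ne_zero hf.2 hg.2 a) fun ε hε => ?_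
  · beta_reduce
    rw [Measure.integral_comp_mul_left fun x => starRingEnd 𝕜 (f (x - m)) * f (x - n), horth hmn,
      smul_zero]
  · obtain ⟨F, α, hF⟩ := happrox ε hε
    refine ⟨∑ k ∈ F, α k • fun x => f (a * x - k), Submodule.sum_mem _ fun k _ =>
      Submodule.smul_mem _ _ (Submodule.subset_span ⟨k, rfl⟩), ?_⟩
    convert hF using 2
    funext x
    simp

end TwoScale

section OrthogonalTranslates

variable {𝕜 : Type*} [RCLike 𝕜]

lemma image_translate_subset_continuousCompactSupport {f : ℝ → 𝕜}
    (hf : f ∈ continuousCompactSupport ℝ 𝕜) (S : Set ℝ) :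
    (fun t x => f (x - t)) '' S ⊆ continuousCompactSupport ℝ 𝕜 := by
  rintro _ ⟨t, -, rfl⟩
  simpa using comp_mul_sub_mem_continuousCompactSupport hf one_ne_zero t

lemma bddBelow_support {f : ℝ → 𝕜} (hf : f ∈ continuousCompactSupport ℝ 𝕜) :
    BddBelow (Function.support f) :=
  hf.2.isCompact.bddBelow.mono (subset_tsupport f)

lemma disjoint_translateSpan_of_orthogonal {H Λ : AddSubgroup ℝ} {f g h : ℝ → 𝕜}
    (hf : BddBelow (Function.support f)) (hg : g ∈ continuousCompactSupport ℝ 𝕜)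
    (hh : h ∈ continuousCompactSupport ℝ 𝕜) (hgf : g ∈ translateSpan Λ f)
    (hhf : h ∈ translateSpan Λ f)
    (horth : ∀ t t' : ℝ, t - t' ∈ H ⊓ Λ →
      ∫ x : ℝ, starRingEnd 𝕜 (g (x - t)) * h (x - t') = 0) :
    Disjoint (translateSpan H g) (translateSpan H h) := by
  classical
  obtain ⟨d, hd, rfl⟩ := mem_translateSpan.1 hgf
  obtain ⟨e, he, rfl⟩ := mem_translateSpan.1 hhf
  rw [Submodule.disjoint_def]
  rintro _ ⟨p, hp, rfl⟩ ⟨q, hq, hpq⟩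
  change translation q (translation e f) = translation p (translation d f) at hpq
  change translation p (translation d f) = 0
  by_contra hne
  have hp0 : p ≠ 0 := by rintro rfl; simp at hne
  have hf0 : f ≠ 0 := by rintro rfl; simp at hne
  have hg0 : translation d f ≠ 0 := by intro h; simp [h] at hne
  have he0 : e ≠ 0 := by rintro rfl; simp [← hpq] at hne
  have hpde : p * d = q * e := translation_injective hf0 hf (by simp [hpq])
  obtain ⟨d', e', he'0, hcross, hsub⟩ := exists_coset_components hp hq hp0 he0 hpde hd he
  have hcommon : translation e' (translation d f) = translation d' (translation e f) := by
    rw [← translation_mul, ← translation_mul, hcross]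
  refine translation_ne_zero he'0 hg0 (bddBelow_support hg) ?_
  refine eq_zero_of_mem_span_of_integral_eq_zero volume
    (image_translate_subset_continuousCompactSupport hg e'.coeff.support)
    (image_translate_subset_continuousCompactSupport hh d'.coeff.support) ?_
    (translation_mem_span (fun _ => id) _) (hcommon ▸ translation_mem_span (fun _ => id) _)
  rintro _ ⟨t, ht, rfl⟩ _ ⟨t', ht', rfl⟩
  exact horth t t' (hsub t ht t' ht')

end OrthogonalTranslates

section Dyadic

variable {𝕜 : Type*} [RCLike 𝕜]

/-- The dilation sending `f` to `x ↦ f (2 ^ k * x)`, which moves between the dyadic scales. -/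
noncomputable def dilate (k : ℤ) : (ℝ → 𝕜) →ₗ[𝕜] ℝ → 𝕜 :=
  LinearMap.funLeft 𝕜 𝕜 fun x => (2 : ℝ) ^ k * x

lemma dilate_apply (k : ℤ) (f : ℝ → 𝕜) (x : ℝ) : dilate k f x = f ((2 : ℝ) ^ k * x) := rfl

lemma dilate_ne_zero (k : ℤ) {f : ℝ → 𝕜} (hf : f ≠ 0) : dilate k f ≠ 0 :=
  (map_ne_zero_iff _ (LinearMap.funLeft_injective_of_surjective 𝕜 𝕜 _
    (mul_left_surjective₀ (zpow_ne_zero k two_ne_zero)))).2 hf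

lemma dilate_mem_continuousCompactSupport (k : ℤ) {f : ℝ → 𝕜}
    (hf : f ∈ continuousCompactSupport ℝ 𝕜) : dilate k f ∈ continuousCompactSupport ℝ 𝕜 := by
  have hmem := comp_mul_sub_mem_continuousCompactSupport hf (zpow_ne_zero k (two_ne_zero' ℝ)) 0
  simp only [sub_zero] at hmem
  exact hmem

lemma dilate_sub_mul (k : ℤ) (f : ℝ → 𝕜) (c x : ℝ) :
    dilate k f (x - c * 2 ^ (-k)) = f (2 ^ k * x - c) := by
  rw [dilate_apply, mul_sub, mul_left_comm, ← zpow_add₀ two_ne_zero, add_neg_cancel, zpow_zero,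
    mul_one]

/-- The lattice `2⁻ᵏ b⁻¹ ℤ`, written without division as the set of `t` with `b 2ᵏ t ∈ ℤ`:
the shifts of the functions sampled at scale `k` with denominator `b`. -/
noncomputable def dyadicLattice (b : ℕ) (k : ℤ) : AddSubgroup ℝ :=
  (Int.castAddHom ℝ).range.comap (AddMonoidHom.mulLeft (b * 2 ^ k))

lemma mem_dyadicLattice {b : ℕ} {k : ℤ} {t : ℝ} :
    t ∈ dyadicLattice b k ↔ ∃ n : ℤ, (n : ℝ) = b * 2 ^ k * t := Iff.rfl

lemma dyadicLattice_mono (b : ℕ) : Monotone (dyadicLattice b) := by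
  intro k l hkl t ht
  obtain ⟨n, hn⟩ := mem_dyadicLattice.1 ht
  obtain ⟨m, rfl⟩ := Int.le.dest hkl
  refine mem_dyadicLattice.2 ⟨2 ^ m * n, ?_⟩
  push_cast
  rw [hn, zpow_add₀ two_ne_zero, zpow_natCast]
  ring

lemma dyadicLattice_one_le (b : ℕ) (k : ℤ) : dyadicLattice 1 k ≤ dyadicLattice b k := by
  intro t ht
  obtain ⟨n, hn⟩ := mem_dyadicLattice.1 ht
  refine mem_dyadicLattice.2 ⟨b * n, ?_⟩
  push_cast at hn ⊢
  rw [hn]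
  ring

lemma dyadicLattice_inf_le {b : ℕ} (hb : Odd b) (k : ℤ) :
    dyadicLattice b k ⊓ dyadicLattice 1 (k + 1) ≤ dyadicLattice 1 k := by
  rintro t ⟨hbt, h1t⟩
  obtain ⟨n, hn⟩ := mem_dyadicLattice.1 hbt
  obtain ⟨m, hm⟩ := mem_dyadicLattice.1 h1t
  rw [Nat.cast_one, one_mul, zpow_add_one₀ two_ne_zero] at hm
  have hmul : (b : ℤ) * m = 2 * n := by
    rify
    rw [hn, hm]
    ring
  obtain ⟨r, rfl⟩ : Even m :=
    (Int.even_mul.1 (hmul ▸ even_two_mul n)).resolve_left (by simpa using hb)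
  refine mem_dyadicLattice.2 ⟨r, ?_⟩
  push_cast at hm ⊢
  linarith

lemma mul_zpow_neg_mem_dyadicLattice {b : ℕ} {c : ℝ} {a : ℤ} (h : b * c = a) (k m : ℤ) :
    c * m * 2 ^ (-k) ∈ dyadicLattice b k := by
  refine mem_dyadicLattice.2 ⟨a * m, ?_⟩
  have hpow : (2 : ℝ) ^ k * 2 ^ (-k) = 1 := by
    rw [← zpow_add₀ two_ne_zero, add_neg_cancel, zpow_zero]
  push_cast
  linear_combination -m * h - b * c * m * hpow

lemma comp_zpow_mul_sub_mem_translateSpan {b : ℕ} {c : ℝ} {a : ℤ} (h : b * c = a) (k m : ℤ)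
    (f : ℝ → 𝕜) :
    (fun x => f (2 ^ k * x - c * m)) ∈ translateSpan (dyadicLattice b k) (dilate k f) := by
  simpa only [dilate_sub_mul] using
    translate_mem_translateSpan (mul_zpow_neg_mem_dyadicLattice h k m) (dilate k f)

lemma span_range_le_translateSpan {b : ℕ} {c : ℝ} {a : ℤ} (h : b * c = a) (k : ℕ) (f : ℝ → 𝕜) :
    Submodule.span 𝕜 (Set.range fun (m : ℤ) x => f (2 ^ k * x - c * m)) ≤
      translateSpan (dyadicLattice b k) (dilate k f) :=
  span_range_le_iff.2 fun m => by
    simpa only [zpow_natCast] using comp_zpow_mul_sub_mem_translateSpan h k m f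

lemma linearIndependent_comp_pow_mul_sub {f : ℝ → 𝕜} (hf : f ∈ continuousCompactSupport ℝ 𝕜)
    (hf0 : f ≠ 0) {c : ℝ} (hc : c ≠ 0) (k : ℕ) :
    LinearIndependent 𝕜 fun (m : ℤ) x => f (2 ^ k * x - c * m) := by
  have hker : LinearMap.ker ((translation (K := 𝕜)).toLinearMap.flip (dilate k f)) = ⊥ :=
    LinearMap.ker_eq_bot.2 <| translation_injective (dilate_ne_zero k hf0)
      (bddBelow_support (dilate_mem_continuousCompactSupport k hf))
  have hinj : Function.Injective fun m : ℤ => c * m * 2 ^ (-k : ℤ) := fun m n hmn => by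
    simpa [hc] using hmn
  have hfam : (fun (m : ℤ) x => f (2 ^ k * x - c * m)) =
      translation.toLinearMap.flip (dilate k f) ∘ AddMonoidAlgebra.basis ℝ 𝕜 ∘
        fun m : ℤ => c * m * 2 ^ (-k : ℤ) := by
    funext m x
    simp only [Function.comp_apply, LinearMap.flip_apply, AlgHom.toLinearMap_apply,
      AddMonoidAlgebra.basis_apply, translation_single, one_mul, dilate_sub_mul, zpow_natCast]
  rw [hfam]
  exact ((AddMonoidAlgebra.basis ℝ 𝕜).linearIndependent.comp _ hinj).map' _ hker

lemma dilate_mem_translateSpan {φ ψ : ℝ → 𝕜}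
    (h : ∀ n : ℕ, ψ ∈ Submodule.span 𝕜 (Set.range fun (m : ℤ) x => φ (2 ^ (n + 1) * x - m)))
    {k l : ℤ} (hkl : k < l) : dilate k ψ ∈ translateSpan (dyadicLattice 1 l) (dilate l φ) := by
  obtain ⟨n, rfl⟩ := Int.le.dest (Int.add_one_le_of_lt hkl)
  have hle : (Submodule.span 𝕜 (Set.range fun (m : ℤ) x => φ (2 ^ (n + 1) * x - m))).map
      (dilate k) ≤ translateSpan (dyadicLattice 1 (k + 1 + n)) (dilate (k + 1 + n) φ) := by
    rw [Submodule.map_span_le]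
    rintro _ ⟨m, rfl⟩
    have hmem := comp_zpow_mul_sub_mem_translateSpan (b := 1) (c := 1) (a := 1) (by simp)
      (k + 1 + n) m φ
    convert hmem using 1
    funext x
    have hpow : (2 : ℝ) ^ (k + 1 + n : ℤ) = 2 ^ (n + 1) * 2 ^ k := by
      rw [add_assoc, add_comm, zpow_add₀ two_ne_zero, add_comm, zpow_add_one₀ two_ne_zero,
        zpow_natCast, pow_succ]
    simp only [dilate_apply, one_mul, hpow, mul_assoc]
  exact hle (Submodule.mem_map_of_mem (h n))

lemma integral_dilate_mul_dilate_eq_zero {ψ : ℝ → 𝕜}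
    (h : ∀ l : ℤ, ∫ x : ℝ, starRingEnd 𝕜 (ψ (2 * x - l)) * ψ x = 0) (k : ℤ) {t t' : ℝ}
    (ht : t - t' ∈ dyadicLattice 1 (k + 1)) :
    ∫ x : ℝ, starRingEnd 𝕜 (dilate (k + 1) ψ (x - t)) * dilate k ψ (x - t') = 0 := by
  obtain ⟨l, hl⟩ := mem_dyadicLattice.1 ht
  rw [Nat.cast_one, one_mul] at hl
  let g : ℝ → 𝕜 := fun y => starRingEnd 𝕜 (ψ (2 * y - l)) * ψ y
  have hcomp : ∀ x, starRingEnd 𝕜 (dilate (k + 1) ψ (x - t)) * dilate k ψ (x - t') =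
      g (2 ^ k * (x - t')) := by
    intro x
    have harg : (2 : ℝ) ^ (k + 1) * (x - t) = 2 * (2 ^ k * (x - t')) - l := by
      rw [hl, zpow_add_one₀ two_ne_zero]
      ring
    rw [dilate_apply, dilate_apply, harg]
  calc ∫ x : ℝ, starRingEnd 𝕜 (dilate (k + 1) ψ (x - t)) * dilate k ψ (x - t')
      = ∫ x : ℝ, g (2 ^ k * (x - t')) := integral_congr_ae (.of_forall hcomp)
    _ = ∫ x : ℝ, g (2 ^ k * x) := integral_sub_right_eq_self (fun x => g (2 ^ k * x)) t'
    _ = 0 := by rw [Measure.integral_comp_mul_left, h l, smul_zero]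

/-- A scaling function `φ` and a wavelet `ψ`, both continuous with compact support: at every scale
finer than its own, `ψ` is a finite combination of the integer translates of the dilated `φ`, and
it is orthogonal to the integer translates of its dilation by two. -/
structure IsWaveletPair (φ ψ : ℝ → 𝕜) : Prop where
  scaling_mem : φ ∈ continuousCompactSupport ℝ 𝕜
  wavelet_mem : ψ ∈ continuousCompactSupport ℝ 𝕜
  ne_zero : ψ ≠ 0
  mem_span : ∀ n : ℕ, ψ ∈ Submodule.span 𝕜 (Set.range fun (m : ℤ) x => φ (2 ^ (n + 1) * x - m))
  integral_eq_zero : ∀ l : ℤ, ∫ x : ℝ, starRingEnd 𝕜 (ψ (2 * x - l)) * ψ x = 0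

variable {φ ψ : ℝ → 𝕜} {b : ℕ}

lemma disjoint_translateSpan_dilate_succ (h : IsWaveletPair φ ψ) (hb : Odd b) (k : ℤ) :
    Disjoint (translateSpan (dyadicLattice b (k + 1)) (dilate (k + 1) ψ))
      (translateSpan (dyadicLattice b (k + 1)) (dilate k ψ)) :=
  disjoint_translateSpan_of_orthogonal (Λ := dyadicLattice 1 (k + 1 + 1))
    (bddBelow_support (dilate_mem_continuousCompactSupport (k + 1 + 1) h.scaling_mem))
    (dilate_mem_continuousCompactSupport _ h.wavelet_mem)
    (dilate_mem_continuousCompactSupport _ h.wavelet_mem)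
    (dilate_mem_translateSpan h.mem_span (by lia)) (dilate_mem_translateSpan h.mem_span (by lia))
    fun _ _ ht => integral_dilate_mul_dilate_eq_zero h.integral_eq_zero k
      (dyadicLattice_inf_le hb (k + 1) ht)

lemma exists_translation_dilate_eq (h : IsWaveletPair φ ψ) (k : ℤ) :
    ∃ e ∈ supportedIn 𝕜 (dyadicLattice 1 k), e ≠ 0 ∧
      translation e (dilate k φ) = dilate (k - 1) ψ := by
  obtain ⟨e, he, heφ⟩ := mem_translateSpan.1 (dilate_mem_translateSpan h.mem_span (sub_one_lt k))
  refine ⟨e, he, ?_, heφ⟩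
  rintro rfl
  exact dilate_ne_zero (k - 1) h.ne_zero (by simpa using heφ.symm)

lemma disjoint_translateSpan_dilate (h : IsWaveletPair φ ψ) (hb : Odd b) (k : ℤ) :
    Disjoint (translateSpan (dyadicLattice b k) (dilate k ψ))
      (translateSpan (dyadicLattice b k) (dilate k φ)) := by
  obtain ⟨e, he, he0, heφ⟩ := exists_translation_dilate_eq h k
  have hdisj := disjoint_translateSpan_dilate_succ h hb (k - 1)
  rw [sub_add_cancel] at hdisj
  refine disjoint_translateSpan_of_map_le
    (bddBelow_support (dilate_mem_continuousCompactSupport k h.wavelet_mem))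
    (supportedIn_mono (dyadicLattice_one_le b k) he) he0 ?_ hdisj
  rw [Submodule.map_le_iff_le_comap]
  exact fun v hv => translation_mem_translateSpan_of_mem (heφ ▸ self_mem_translateSpan _ _) hv

lemma disjoint_translateSpan_dilate_sup (h : IsWaveletPair φ ψ) (hb : Odd b) {k l : ℤ}
    (hkl : k ≤ l) :
    Disjoint (translateSpan (dyadicLattice b l) (dilate l ψ))
      (translateSpan (dyadicLattice b k) (dilate k φ) ⊔
        translateSpan (dyadicLattice b l) (dilate l φ)) := by
  obtain ⟨e, he, he0, heφ⟩ := exists_translation_dilate_eq h k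
  have he' : e ∈ supportedIn 𝕜 (dyadicLattice b l) :=
    supportedIn_mono ((dyadicLattice_one_le b k).trans (dyadicLattice_mono b hkl)) he
  have heφ' : translation e (dilate k φ) ∈ translateSpan (dyadicLattice b l) (dilate l φ) :=
    heφ ▸ translateSpan_mono (dyadicLattice_one_le b l) _
      (dilate_mem_translateSpan h.mem_span ((sub_one_lt k).trans_le hkl))
  refine disjoint_translateSpan_of_map_le
    (bddBelow_support (dilate_mem_continuousCompactSupport l h.wavelet_mem)) he' he0 ?_
    (disjoint_translateSpan_dilate h hb l)
  rw [Submodule.map_le_iff_le_comap]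
  exact sup_le
    (fun v hv => translation_mem_translateSpan_of_mem heφ'
      (translateSpan_mono (dyadicLattice_mono b hkl) _ hv))
    fun v hv => translation_mem_translateSpan he' hv

theorem span_range_inf_iSup_span_range_le (h : IsWaveletPair φ ψ) (hb : Odd b) {c₁ c₂ : ℝ}
    {a₁ a₂ : ℤ} (hc₁ : b * c₁ = a₁) (hc₂ : b * c₂ = a₂) (k : ℕ) :
    Submodule.span 𝕜 (Set.range fun (m : ℤ) x => φ (2 ^ k * x - c₂ * m)) ⊓
        ⨆ i : ℕ, Submodule.span 𝕜 (Set.range fun (m : ℤ) x => ψ (2 ^ i * x - c₁ * m)) ≤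
      ⨆ i < k, Submodule.span 𝕜 (Set.range fun (m : ℤ) x => ψ (2 ^ i * x - c₁ * m)) := by
  refine inf_iSup_le_iSup_lt fun N hN => ?_
  have hbelow : ⨆ i < N, Submodule.span 𝕜 (Set.range fun (m : ℤ) x => ψ (2 ^ i * x - c₁ * m)) ≤
      translateSpan (dyadicLattice b N) (dilate N φ) :=
    iSup₂_le fun i hi => (span_range_le_translateSpan hc₁ i ψ).trans <|
      (translateSpan_mono (dyadicLattice_mono b (by exact_mod_cast hi.le)) _).trans <|
      translateSpan_le <| translateSpan_mono (dyadicLattice_one_le b N) _ <|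
      dilate_mem_translateSpan h.mem_span (by exact_mod_cast hi)
  exact (disjoint_translateSpan_dilate_sup h hb (by exact_mod_cast hN)).mono
    (span_range_le_translateSpan hc₁ N ψ)
    (sup_le_sup (span_range_le_translateSpan hc₂ k φ) hbelow)

lemma IsWaveletPair.scaling_ne_zero (h : IsWaveletPair φ ψ) : φ ≠ 0 := by
  rintro rfl
  refine h.ne_zero ((Submodule.mem_bot 𝕜).1 (span_range_le_iff.2 ?_ (h.mem_span 0)))
  exact fun m => (Submodule.mem_bot 𝕜).2 rfl

theorem isWaveletPair_of_orthogonal_translates (hφ : φ ∈ continuousCompactSupport ℝ 𝕜)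
    (hψ : ψ ∈ continuousCompactSupport ℝ 𝕜) (hψ0 : ψ ≠ 0)
    (hφorth : Pairwise fun m n : ℤ => ∫ x : ℝ, starRingEnd 𝕜 (φ (x - m)) * φ (x - n) = 0)
    (happrox : ∀ (n : ℕ) (ε : ℝ), 0 < ε → ∃ (F : Finset ℤ) (α : ℤ → 𝕜),
      eLpNorm (fun x => ψ x - ∑ k ∈ F, α k * φ (2 ^ (n + 1) * x - k)) 2 volume <
        ENNReal.ofReal ε)
    (hψorth : ∀ l : ℤ, ∫ x : ℝ, starRingEnd 𝕜 (ψ (2 * x - l)) * ψ x = 0) :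
    IsWaveletPair φ ψ where
  scaling_mem := hφ
  wavelet_mem := hψ
  ne_zero := hψ0
  mem_span n := mem_span_range_comp_mul_sub_intCast hφ hψ hφorth (by positivity) (happrox n)
  integral_eq_zero := hψorth

end Dyadic

lemma linearIndependent_sumElim_of_forall_finset {K X ι κ : Type*} [Field K] {f : ι → X → K}
    {p : κ → X → K}
    (h : ∀ (F : Finset ι) (G : Finset κ) (α : ι → K) (β : κ → K),
      (fun x => ∑ m ∈ F, α m * f m x + ∑ r ∈ G, β r * p r x) = 0 →
        (∀ m ∈ F, α m = 0) ∧ ∀ r ∈ G, β r = 0) :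
    LinearIndependent K (Sum.elim f p) := by
  refine linearIndependent_iff'.2 fun s g hs => ?_
  have hzero := h s.toLeft s.toRight (fun m => g (.inl m)) (fun r => g (.inr r)) <| by
    rw [← hs, Finset.sum_sum_eq_sum_toLeft_add_sum_toRight]
    funext x
    simp
  rintro (m | r) hi
  · exact hzero.1 m (Finset.mem_toLeft.2 hi)
  · exact hzero.2 r (Finset.mem_toRight.2 hi)

theorem stmt4_general {𝕜 : Type*} [RCLike 𝕜] {φ ψ : ℝ → 𝕜} (hpair : IsWaveletPair φ ψ)
    {σ : ℕ → ℕ} (hσ : ∀ j, σ j ≤ j) {w : ℕ → 𝕜} (hw : ∀ j, w j ≠ 0)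
    {a₁ a₂ : ℤ} {b₁ b₂ : ℕ} (hb₁ : Odd b₁) (hb₂ : Odd b₂) {c₁ c₂ : ℝ}
    (hc₁ : c₁ = a₁ / b₁) (hc₂ : c₂ = a₂ / b₂) (hc₂0 : c₂ ≠ 0)
    (h1d : ∀ (F : Finset ℤ) (G : Finset (ℕ × ℤ)) (α : ℤ → 𝕜) (β : ℕ × ℤ → 𝕜),
      (fun x : ℝ => ∑ m ∈ F, α m * φ (x - c₁ * m) +
        ∑ p ∈ G, β p * ψ (2 ^ p.1 * x - c₁ * p.2)) = 0 →
      (∀ m ∈ F, α m = 0) ∧ ∀ p ∈ G, β p = 0)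
    (F₀ : Finset (ℤ × ℤ)) (F₁ F₂ : Finset (ℕ × ℤ × ℤ)) (α : ℤ × ℤ → 𝕜) (β γ : ℕ × ℤ × ℤ → 𝕜)
    (hsum : (fun x : ℝ × ℝ =>
      (∑ m ∈ F₀, α m * (φ (x.1 - c₁ * m.1) * φ (x.2 - c₁ * m.2))) +
      (∑ p ∈ F₁, β p * (w p.1 * ψ (2 ^ p.1 * x.1 - c₁ * p.2.1) *
        φ (2 ^ σ p.1 * x.2 - c₂ * p.2.2))) +
      (∑ p ∈ F₂, γ p * (w p.1 * φ (2 ^ σ p.1 * x.1 - c₂ * p.2.1) *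
        ψ (2 ^ p.1 * x.2 - c₁ * p.2.2)))) =ᵐ[volume] 0) :
    (∀ m ∈ F₀, α m = 0) ∧ (∀ p ∈ F₁, β p = 0) ∧ (∀ p ∈ F₂, γ p = 0) := by
  have hφc : Continuous φ := hpair.scaling_mem.1
  have hψc : Continuous ψ := hpair.wavelet_mem.1
  have hb₁0 : (b₁ : ℝ) ≠ 0 := Nat.cast_ne_zero.2 hb₁.pos.ne'
  have hb₂0 : (b₂ : ℝ) ≠ 0 := Nat.cast_ne_zero.2 hb₂.pos.ne'
  rw [Continuous.ae_eq_iff_eq volume (by fun_prop) continuous_zero] at hsum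
  have hzero := coeff_eq_zero_of_sum_mul_eq_zero (linearIndependent_sumElim_of_forall_finset h1d)
    (fun j => linearIndependent_comp_pow_mul_sub hpair.scaling_mem hpair.scaling_ne_zero hc₂0 (σ j))
    (fun j => (span_range_inf_iSup_span_range_le hpair (hb₁.mul hb₂) (a₁ := a₁ * b₂)
      (a₂ := a₂ * b₁) (by push_cast; rw [hc₁]; field_simp) (by push_cast; rw [hc₂]; field_simp)
      (σ j)).trans (biSup_mono fun i hi => hi.trans_le (hσ j)))
    (F₀ := F₀) (F₁ := F₁) (F₂ := F₂) (α := α) (β := fun r => β r * w r.1)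
    (γ := fun r => γ r * w r.1) (by simpa only [mul_assoc] using hsum)
  simpa only [mul_eq_zero, hw, or_false] using hzero

/-- Under the admissibility hypotheses, the "unsheared" family `Γ₃`,
consisting of `φ¹(x₁ - c₁m₁)φ¹(x₂ - c₁m₂)`, of
`ψ_{j,0,m}(x₁,x₂) = 2^(3j/4) ψ¹(2^j x₁ - c₁m₁) φ¹(2^⌊j/2⌋ x₂ - c₂m₂)` and of
`ψ̃_{j,0,m}(x₁,x₂) = 2^(3j/4) φ¹(2^⌊j/2⌋ x₁ - c₂m₁) ψ¹(2^j x₂ - c₁m₂)`,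
is linearly independent in `L²(ℝ²)`. -/
theorem stmt4
    -- admissibility hypotheses on φ¹ (= φ) and ψ¹ (= ψ)
    (s : ℝ) (hs : 0 < s) (φ ψ : ℝ → ℂ)
    (hφc : Continuous φ) (hφsupp : tsupport φ = Set.Icc 0 s)
    (hφON : ∀ m m' : ℤ,
      (∫ x : ℝ, (starRingEnd ℂ) (φ (x - m)) * φ (x - m')) = if m = m' then 1 else 0)
    (hψc : Continuous ψ) (hψcs : HasCompactSupport ψ)
    (hψorth : ∀ (j j' : ℕ) (l l' : ℤ), (j, l) ≠ (j', l') →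
      (∫ x : ℝ, (starRingEnd ℂ) (ψ ((2 : ℝ) ^ j * x - l)) * ψ ((2 : ℝ) ^ j' * x - l')) = 0)
    (hψne : ∀ (j : ℕ) (l : ℤ), (fun x : ℝ => ψ ((2 : ℝ) ^ j * x - l)) ≠ 0)
    (hψspan : ∀ (J j : ℕ), j ≤ J → ∀ l : ℤ, ∀ ε : ℝ, 0 < ε →
      ∃ (F : Finset ℤ) (a : ℤ → ℂ),
        eLpNorm (fun x : ℝ =>
            ψ ((2 : ℝ) ^ j * x - l) - ∑ k ∈ F, a k * φ ((2 : ℝ) ^ (J + 1) * x - k)) 2 volume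
          < ENNReal.ofReal ε)
    -- sampling constants
    (a₁ b₁ a₂ b₂ : ℕ) (ha₁ : 0 < a₁) (ha₂ : 0 < a₂) (hb₁ : 0 < b₁) (hb₂ : 0 < b₂)
    (hb₁odd : Odd b₁) (hb₂odd : Odd b₂)
    (c₁ c₂ : ℝ) (hc₁ : c₁ = (a₁ : ℝ) / b₁) (hc₂ : c₂ = (a₂ : ℝ) / b₂)
    -- linear independence of the sampled 1D wavelet system
    (h1d : ∀ c : ℝ, (c = c₁ ∨ c = c₂) →
      ∀ (F : Finset ℤ) (G : Finset (ℕ × ℤ)) (α : ℤ → ℂ) (β : ℕ × ℤ → ℂ),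
        (fun x : ℝ => ∑ m ∈ F, α m * φ (x - c * m) +
            ∑ p ∈ G, β p * ψ ((2 : ℝ) ^ p.1 * x - c * p.2)) = 0 →
        (∀ m ∈ F, α m = 0) ∧ ∀ p ∈ G, β p = 0) :
    -- conclusion: linear independence of Γ₃ in L²(ℝ²)
    ∀ (F₀ : Finset (ℤ × ℤ)) (F₁ F₂ : Finset (ℕ × ℤ × ℤ))
      (α : ℤ × ℤ → ℂ) (β γ : ℕ × ℤ × ℤ → ℂ),
      (fun x : ℝ × ℝ =>
          (∑ m ∈ F₀, α m * (φ (x.1 - c₁ * m.1) * φ (x.2 - c₁ * m.2))) +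
          (∑ p ∈ F₁, β p * ((((2 : ℝ) ^ ((3 * (p.1 : ℝ)) / 4) : ℝ) : ℂ) *
            ψ ((2 : ℝ) ^ p.1 * x.1 - c₁ * p.2.1) *
            φ ((2 : ℝ) ^ (p.1 / 2) * x.2 - c₂ * p.2.2))) +
          (∑ p ∈ F₂, γ p * ((((2 : ℝ) ^ ((3 * (p.1 : ℝ)) / 4) : ℝ) : ℂ) *
            φ ((2 : ℝ) ^ (p.1 / 2) * x.1 - c₂ * p.2.1) *
            ψ ((2 : ℝ) ^ p.1 * x.2 - c₁ * p.2.2))))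
        =ᵐ[volume] 0 →
      (∀ m ∈ F₀, α m = 0) ∧ (∀ p ∈ F₁, β p = 0) ∧ (∀ p ∈ F₂, γ p = 0) := by
  have hφcs : HasCompactSupport φ := by
    rw [HasCompactSupport, hφsupp]
    exact isCompact_Icc
  have hpair : IsWaveletPair φ ψ := isWaveletPair_of_orthogonal_translates ⟨hφc, hφcs⟩ ⟨hψc, hψcs⟩
    (by simpa using hψne 0 0) (fun m n hmn => (hφON m n).trans (if_neg hmn))
    (fun n ε hε => by simpa using hψspan n 0 n.zero_le 0 ε hε)
    (fun l => by simpa using hψorth 1 0 l 0 (by simp))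
  have hweight : ∀ j : ℕ, (((2 : ℝ) ^ ((3 * (j : ℝ)) / 4) : ℝ) : ℂ) ≠ 0 := fun j =>
    Complex.ofReal_ne_zero.2 (Real.rpow_pos_of_pos two_pos _).ne'
  exact stmt4_general hpair (σ := (· / 2)) (fun j => Nat.div_le_self j 2) hweight hb₁odd hb₂odd
    (a₁ := a₁) (a₂ := a₂) (by simpa using hc₁) (by simpa using hc₂)
    (by rw [hc₂]; positivity) (h1d c₁ (.inl rfl))
end
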